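/- arXiv:1410.6838 — 5 statements merged into one kernel-verified Lean document; each statement's English description precedes it below -/
import Mathlib

section
/- Transitivity of stable degeneration: let X, Y, Z be finitely generated left A-modules over a finite-dimensional k-algebra A. If X ≤_st Y and Y ≤_st Z, then X ≤_st Z. Concretely: if there are finitely generated projective A-modules P, Q, R, S with X ⊕ P ≤_deg Y ⊕ Q and Y ⊕ R ≤_deg Z ⊕ S, then there are finitely generated projective A-modules P', Q' with X ⊕ P' ≤_deg Z ⊕ Q'. -/
/-!
For a finitely generated module `M` over a left Artinian ring `A`, `M ≤_deg N` means that
`N ≅ Q / tQ` for some `A[[t]]`-submodule `Q` of `M[[t]]` containing some `t ^ s M[[t]]`. Indeed, in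
`0 → N → M ⊕ Z → Z → 0` the endomorphism `b` of `Z` can be made nilpotent, and then `Q` is the
kernel of the evaluation `M[[t]] → Z` at `t = b`; conversely `Z = M[[t]] / Q`.

Given lattices `Q ⊆ M[[t]]` from `M` to `N` and `R ⊆ N[[u]]` from `N` to `L` with
`u ^ r N[[u]] ⊆ uR`, substitute `t = u ^ (r + 1)`: the series `q₀(t) + u q₁(t) + ⋯ + u ^ r q_r(t)`
with all `qᵢ ∈ Q` whose reductions `hᵢ ∈ N` form a polynomial `h₀ + u h₁ + ⋯ + u ^ r h_r ∈ R` are a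
lattice from `M` to `L`. Hence `≤_deg` is transitive, and adding projective summands to both
degenerations lets them be composed.
-/

universe u

/-- `DegLE A M N` : `M ≤_deg N`, i.e. there exist a finitely generated `A`-module `Z`
and a short exact sequence `0 → N → M ⊕ Z → Z → 0`. -/
def DegLE (A : Type u) [Ring A] (M : Type u) [AddCommGroup M] [Module A M]
    (N : Type u) [AddCommGroup N] [Module A N] : Prop :=
  ∃ (Z : Type u) (_ : AddCommGroup Z) (_ : Module A Z), Module.Finite A Z ∧
    ∃ (f : N →ₗ[A] M × Z) (g : M × Z →ₗ[A] Z),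
      Function.Injective f ∧ Function.Surjective g ∧ LinearMap.range f = LinearMap.ker g

/-- `StDegLE A X Y` : `X ≤_st Y`, i.e. there exist finitely generated projective
`A`-modules `P` and `Q` with `X ⊕ P ≤_deg Y ⊕ Q`. -/
def StDegLE (A : Type u) [Ring A] (X : Type u) [AddCommGroup X] [Module A X]
    (Y : Type u) [AddCommGroup Y] [Module A Y] : Prop :=
  ∃ (P : Type u) (_ : AddCommGroup P) (_ : Module A P)
    (Q : Type u) (_ : AddCommGroup Q) (_ : Module A Q),
    Module.Finite A P ∧ Module.Projective A P ∧
    Module.Finite A Q ∧ Module.Projective A Q ∧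
    DegLE A (X × P) (Y × Q)

section ExactSequences

variable {A : Type*} [Ring A] {M N Z : Type*} [AddCommGroup M] [Module A M] [AddCommGroup N]
  [Module A N] [AddCommGroup Z] [Module A Z]

theorem exists_map_range_pow_eq_and_disjoint_ker [IsArtinian A Z] [IsNoetherian A Z]
    (b : Module.End A Z) :
    ∃ s, (LinearMap.range (b ^ s)).map b = LinearMap.range (b ^ s) ∧
      Disjoint (LinearMap.range (b ^ s)) (LinearMap.ker b) := by
  obtain ⟨n, hn⟩ := IsArtinian.monotone_stabilizes b.iterateRange
  have range_eq (m : ℕ) (hm : n ≤ m) : LinearMap.range (b ^ n) = LinearMap.range (b ^ m) := hn m hm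
  obtain ⟨s, hs, hns⟩ := (b.eventually_disjoint_ker_pow_range_pow.and
    (Filter.eventually_ge_atTop (n + 1))).exists
  refine ⟨s, ?_, hs.symm.mono_right fun z hz ↦ ?_⟩
  · rw [← LinearMap.range_comp, ← Module.End.mul_eq_comp, ← pow_succ',
      ← range_eq s (by lia), ← range_eq (s + 1) (by lia)]
  · rw [LinearMap.mem_ker] at hz ⊢
    rw [← Nat.sub_add_cancel (show 1 ≤ s by lia), pow_succ, Module.End.mul_apply, hz, map_zero]

variable {f : N →ₗ[A] M × Z} {a : M →ₗ[A] Z} {b : Module.End A Z} {K : Submodule A Z}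

theorem injective_prodMap_mkQ_comp (hf : Function.Injective f)
    (hexact : Function.Exact f (a.coprod b)) (hdisj : Disjoint K (LinearMap.ker b)) :
    Function.Injective (LinearMap.id.prodMap K.mkQ ∘ₗ f) := by
  rw [injective_iff_map_eq_zero]
  intro n hn
  have hfst : (f n).1 = 0 := congrArg Prod.fst hn
  have hsnd : (f n).2 ∈ K := (Submodule.Quotient.mk_eq_zero K).1 (congrArg Prod.snd hn)
  have hker : b (f n).2 = 0 := by
    simpa [LinearMap.coprod_apply, hfst] using hexact.apply_apply_eq_zero n
  exact (map_eq_zero_iff f hf).1 (Prod.ext hfst (Submodule.disjoint_def.1 hdisj _ hsnd hker))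

theorem exact_prodMap_mkQ_comp (hexact : Function.Exact f (a.coprod b)) (hK : K.map b = K) :
    Function.Exact (LinearMap.id.prodMap K.mkQ ∘ₗ f)
      ((K.mkQ ∘ₗ a).coprod (K.mapQ K b (Submodule.map_le_iff_le_comap.1 hK.le))) := by
  set g := (K.mkQ ∘ₗ a).coprod (K.mapQ K b (Submodule.map_le_iff_le_comap.1 hK.le))
  have g_mk (m : M) (z : Z) : g (m, K.mkQ z) = K.mkQ (a m + b z) := by simp [g]
  rintro ⟨m, z⟩
  obtain ⟨z, rfl⟩ := K.mkQ_surjective z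
  constructor
  · intro h
    have hmem : a m + b z ∈ K.map b := by
      rwa [g_mk, Submodule.mkQ_apply, Submodule.Quotient.mk_eq_zero, ← hK] at h
    obtain ⟨w, hw, hbw⟩ := hmem
    obtain ⟨n, hn⟩ := (hexact (m, z - w)).1 (by
      rw [LinearMap.coprod_apply, map_sub, hbw]; abel)
    exact ⟨n, by simp [hn, (Submodule.Quotient.mk_eq_zero K).2 hw]⟩
  · rintro ⟨n, hn⟩
    calc g (m, K.mkQ z) = K.mkQ (a.coprod b (f n)) := by rw [← hn]; exact g_mk _ _
      _ = 0 := by rw [hexact.apply_apply_eq_zero, map_zero]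

theorem exists_injective_range_eq {X E : Type*} [AddCommGroup X] [Module A X] [AddCommGroup E]
    [Module A E] {π : X →ₗ[A] N} (hπ : Function.Surjective π) {φ : X →ₗ[A] E}
    (hker : LinearMap.ker π = LinearMap.ker φ) :
    ∃ f : N →ₗ[A] E, Function.Injective f ∧ LinearMap.range f = LinearMap.range φ := by
  let e := π.quotKerEquivOfSurjective hπ
  refine ⟨(LinearMap.ker π).liftQ φ hker.le ∘ₗ e.symm.toLinearMap, ?_, ?_⟩
  · exact (LinearMap.ker_eq_bot.1 (Submodule.ker_liftQ_eq_bot' _ _ hker)).comp e.symm.injective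
  · rw [LinearMap.range_comp_of_range_eq_top _ e.symm.range, Submodule.range_liftQ]

end ExactSequences

namespace DegLE

variable {A : Type u} [Ring A] {M N : Type u} [AddCommGroup M] [Module A M] [AddCommGroup N]
  [Module A N]

theorem of_exact {E Z : Type u} [AddCommGroup E] [Module A E] [AddCommGroup Z] [Module A Z]
    [Module.Finite A Z] (e : E ≃ₗ[A] M × Z) {f : N →ₗ[A] E} {g : E →ₗ[A] Z}
    (hf : Function.Injective f) (hg : Function.Surjective g) (hfg : Function.Exact f g) :
    DegLE A M N := by
  refine ⟨Z, _, _, ‹_›, e.toLinearMap ∘ₗ f, g ∘ₗ e.symm.toLinearMap, e.injective.comp hf,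
    hg.comp e.symm.surjective, ?_⟩
  rw [LinearMap.range_comp, ← hfg.linearMap_ker_eq, LinearMap.ker_comp]
  exact Submodule.map_equiv_eq_comap_symm e _

theorem exists_exact (h : DegLE A M N) :
    ∃ (Z : Type u) (_ : AddCommGroup Z) (_ : Module A Z), Module.Finite A Z ∧
      ∃ (f : N →ₗ[A] M × Z) (g : M × Z →ₗ[A] Z),
        Function.Injective f ∧ Function.Surjective g ∧ Function.Exact f g := by
  obtain ⟨Z, _, _, hZ, f, g, hf, hg, hfg⟩ := h
  exact ⟨Z, _, _, hZ, f, g, hf, hg, LinearMap.exact_iff.2 hfg.symm⟩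

theorem congr {M' N' : Type u} [AddCommGroup M'] [Module A M'] [AddCommGroup N'] [Module A N']
    (h : DegLE A M N) (eM : M ≃ₗ[A] M') (eN : N ≃ₗ[A] N') : DegLE A M' N' := by
  obtain ⟨Z, _, _, _, f, g, hf, hg, hfg⟩ := h.exists_exact
  have hfg' : Function.Exact (f ∘ₗ eN.symm.toLinearMap) g := by
    rw [LinearMap.exact_iff, LinearMap.range_comp_of_range_eq_top _ eN.symm.range,
      hfg.linearMap_ker_eq]
  exact of_exact (eM.prodCongr (.refl A Z)) (hf.comp eN.symm.injective) hg hfg'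

theorem prod_right (h : DegLE A M N) (C : Type u) [AddCommGroup C] [Module A C] :
    DegLE A (M × C) (N × C) := by
  obtain ⟨Z, _, _, _, f, g, hf, hg, hfg⟩ := h.exists_exact
  let e : ((M × Z) × C) ≃ₗ[A] (M × C) × Z :=
    (LinearEquiv.prodAssoc A M Z C).trans <|
      ((LinearEquiv.refl A M).prodCongr (.prodComm A Z C)).trans
        (LinearEquiv.prodAssoc A M C Z).symm
  have hfg' : Function.Exact (f.prodMap (LinearMap.id : C →ₗ[A] C)) (g ∘ₗ LinearMap.fst A _ C) := by
    rintro ⟨x, c⟩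
    simpa using hfg x
  exact of_exact e (hf.prodMap Function.injective_id) (hg.comp Prod.fst_surjective) hfg'

/-- By Fitting's lemma, the part of `Z` on which the endomorphism `b` is bijective can be divided
out without changing the kernel `N`. -/
theorem exists_isNilpotent [IsArtinianRing A] (h : DegLE A M N) :
    ∃ (Z : Type u) (_ : AddCommGroup Z) (_ : Module A Z) (f : N →ₗ[A] M × Z) (a : M →ₗ[A] Z)
      (b : Module.End A Z), IsNilpotent b ∧ Function.Injective f ∧
        Function.Surjective (a.coprod b) ∧ Function.Exact f (a.coprod b) := by
  obtain ⟨Z, _, _, _, f, g, hf, hg, hfg⟩ := h.exists_exact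
  obtain ⟨a, b, rfl⟩ : ∃ (a : M →ₗ[A] Z) (b : Module.End A Z), g = a.coprod b :=
    ⟨g ∘ₗ .inl A M Z, g ∘ₗ .inr A M Z, g.coprod_comp_inl_inr.symm⟩
  obtain ⟨s, hK, hdisj⟩ := exists_map_range_pow_eq_and_disjoint_ker b
  set K := LinearMap.range (b ^ s)
  have hKb : K ≤ K.comap b := Submodule.map_le_iff_le_comap.1 hK.le
  refine ⟨Z ⧸ K, _, _, LinearMap.id.prodMap K.mkQ ∘ₗ f, K.mkQ ∘ₗ a, K.mapQ K b hKb, ⟨s, ?_⟩,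
    injective_prodMap_mkQ_comp hf hfg hdisj, ?_, exact_prodMap_mkQ_comp hfg hK⟩
  · rw [← Submodule.mapQ_pow]
    ext z
    exact (Submodule.Quotient.mk_eq_zero K).2 ⟨z, rfl⟩
  · have hcomp : (K.mkQ ∘ₗ a).coprod (K.mapQ K b hKb) ∘ₗ LinearMap.id.prodMap K.mkQ =
        K.mkQ ∘ₗ a.coprod b := by ext <;> simp
    refine .of_comp (g := LinearMap.id.prodMap K.mkQ) ?_
    rw [← LinearMap.coe_comp, hcomp]
    exact K.mkQ_surjective.comp hg

end DegLE

section Sequences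

variable (A : Type*) [Ring A] {M Z : Type*} [AddCommGroup M] [Module A M] [AddCommGroup Z]
  [Module A Z]

/-- The isomorphism `M ⊕ M[[t]] ≃ M[[t]]`, `(m, q) ↦ m + t q`, where `M[[t]]` is encoded as
`ℕ → M`. -/
def seqCons : (M × (ℕ → M)) ≃ₗ[A] (ℕ → M) where
  toFun x
    | 0 => x.1
    | i + 1 => x.2 i
  invFun q := (q 0, q ∘ Nat.succ)
  map_add' _ _ := by ext (_ | _) <;> rfl
  map_smul' _ _ := by ext (_ | _) <;> rfl
  right_inv _ := by ext (_ | _) <;> rfl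

variable {A}

/-- The map `M ⊕ M[[t]] / Q → M[[t]] / Q`, `(m, q) ↦ m + t q`, for a submodule `Q` stable under
multiplication by `t`. -/
def quotientCons (Q : Submodule A (ℕ → M)) (hQ : ∀ q ∈ Q, seqCons A (0, q) ∈ Q) :
    M × ((ℕ → M) ⧸ Q) →ₗ[A] (ℕ → M) ⧸ Q :=
  (Q.mkQ ∘ₗ (seqCons A).toLinearMap ∘ₗ .inl A M (ℕ → M)).coprod
    (Q.mapQ Q ((seqCons A).toLinearMap ∘ₗ .inr A M (ℕ → M)) hQ)

section QuotientCons

variable {Q : Submodule A (ℕ → M)} (hQ : ∀ q ∈ Q, seqCons A (0, q) ∈ Q)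

theorem quotientCons_mk (m : M) (p : ℕ → M) :
    quotientCons Q hQ (m, Q.mkQ p) = Q.mkQ (seqCons A (m, p)) := by
  have seqCons_eq : seqCons A (m, p) = seqCons A (m, 0) + seqCons A (0, p) := by
    rw [← map_add, Prod.mk_add_mk, add_zero, zero_add]
  rw [seqCons_eq, map_add]
  rfl

theorem quotientCons_mk_comp_succ (q : ℕ → M) :
    quotientCons Q hQ (q 0, Q.mkQ (q ∘ Nat.succ)) = Q.mkQ q := by
  rw [quotientCons_mk]
  exact congrArg Q.mkQ ((seqCons A).apply_symm_apply q)

theorem quotientCons_surjective : Function.Surjective (quotientCons Q hQ) := fun z ↦ by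
  obtain ⟨q, rfl⟩ := Q.mkQ_surjective z
  exact ⟨_, quotientCons_mk_comp_succ hQ q⟩

end QuotientCons

/-- Horner evaluation of a power series `∑ tⁱ qᵢ` over `M`, truncated at `t ^ s`, in the
`A[t]`-module on which `t` acts as `b`, the coefficients being mapped by `a`. -/
def hornerEval (a : M →ₗ[A] Z) (b : Module.End A Z) : ℕ → (ℕ → M) →ₗ[A] Z
  | 0 => 0
  | s + 1 => a ∘ₗ LinearMap.proj 0 + b ∘ₗ hornerEval a b s ∘ₗ LinearMap.funLeft A M Nat.succ

variable (a : M →ₗ[A] Z) (b : Module.End A Z)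

theorem hornerEval_succ (s : ℕ) (q : ℕ → M) :
    hornerEval a b (s + 1) q = a (q 0) + b (hornerEval a b s (q ∘ Nat.succ)) :=
  rfl

theorem hornerEval_succ' (s : ℕ) (q : ℕ → M) :
    hornerEval a b (s + 1) q = hornerEval a b s q + (b ^ s) (a (q s)) := by
  induction s generalizing q with
  | zero => simp [hornerEval]
  | succ s ih =>
    rw [hornerEval_succ, ih, hornerEval_succ, map_add, ← add_assoc, pow_succ',
      Module.End.mul_apply, Function.comp_apply]

theorem hornerEval_eq_zero {s : ℕ} {q : ℕ → M} (hq : ∀ i < s, q i = 0) :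
    hornerEval a b s q = 0 := by
  induction s generalizing q with
  | zero => rfl
  | succ s ih =>
    have htail : hornerEval a b s (q ∘ Nat.succ) = 0 :=
      ih fun i hi ↦ hq (i + 1) (Nat.succ_lt_succ hi)
    rw [hornerEval_succ, hq 0 s.succ_pos, htail]
    simp only [map_zero, add_zero]

variable {a b}

theorem hornerEval_eq_of_pow_eq_zero {s : ℕ} (hb : b ^ s = 0) (q : ℕ → M) :
    hornerEval a b s q = a (q 0) + b (hornerEval a b s (q ∘ Nat.succ)) := by
  rw [← hornerEval_succ, hornerEval_succ', hb, LinearMap.zero_apply, add_zero]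

theorem exists_hornerEval_add_pow_eq (hab : Function.Surjective (a.coprod b)) (s : ℕ) (z : Z) :
    ∃ q w, hornerEval a b s q + (b ^ s) w = z := by
  induction s generalizing z with
  | zero => exact ⟨0, z, by simp⟩
  | succ s ih =>
    obtain ⟨⟨m, z'⟩, rfl⟩ := hab z
    obtain ⟨q, w, rfl⟩ := ih z'
    refine ⟨seqCons A (m, q), w, ?_⟩
    calc hornerEval a b (s + 1) (seqCons A (m, q)) + (b ^ (s + 1)) w
        = a m + b (hornerEval a b s q) + b ((b ^ s) w) := by rw [pow_succ']; rfl
      _ = a.coprod b (m, hornerEval a b s q + (b ^ s) w) := by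
        rw [LinearMap.coprod_apply, map_add, add_assoc]

theorem hornerEval_surjective {s : ℕ} (hab : Function.Surjective (a.coprod b)) (hb : b ^ s = 0) :
    Function.Surjective (hornerEval a b s) := fun z ↦ by
  obtain ⟨q, w, h⟩ := exists_hornerEval_add_pow_eq hab s z
  exact ⟨q, by simpa [hb] using h⟩

end Sequences

section Slices

variable {M : Type*}

/-- The coefficient `qᵢ` in the decomposition `q = ∑ uⁱ qᵢ(uᵈ)`, for `i < d`, of a power series `q`
in `u`. -/
def slice (d i : ℕ) (q : ℕ → M) : ℕ → M := fun j ↦ q (i + d * j)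

theorem slice_comp_succ (d i : ℕ) (q : ℕ → M) : slice d i (q ∘ Nat.succ) = slice d (i + 1) q :=
  funext fun j ↦ congrArg q (by lia)

theorem slice_self (d : ℕ) (q : ℕ → M) : slice d d q = slice d 0 q ∘ Nat.succ :=
  funext fun j ↦ congrArg q (by simp only [Nat.succ_eq_add_one]; ring)

theorem exists_slice_eq {d : ℕ} (p : ℕ → ℕ → M) : ∃ q, ∀ i < d, slice d i q = p i := by
  refine ⟨fun n ↦ p (n % d) (n / d), fun i hi ↦ funext fun j ↦ ?_⟩
  simp only [slice]
  rw [Nat.add_mul_mod_self_left, Nat.mod_eq_of_lt hi, Nat.add_mul_div_left _ _ (by lia),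
    Nat.div_eq_of_lt hi, zero_add]

end Slices

section BaseChange

variable {A : Type*} [Ring A] {M N L : Type*} [AddCommGroup M] [Module A M] [AddCommGroup N]
  [Module A N] [AddCommGroup L] [Module A L]

/-- The composite of two reduction graphs after the base change `t = uᵈ`: the series `q` over `M`
reduces slicewise to coefficients `h i` for `i < d`, and `h`, as a series over `N`, reduces to an
element of `L`. -/
def baseChangeComp (d : ℕ) (Γ : Submodule A ((ℕ → M) × N)) (Δ : Submodule A ((ℕ → N) × L)) :
    Submodule A ((ℕ → M) × L) where
  carrier := {x | ∃ h : ℕ → N, (∀ i < d, (slice d i x.1, h i) ∈ Γ) ∧ (h, x.2) ∈ Δ}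
  zero_mem' := ⟨0, fun _ _ ↦ Γ.zero_mem, Δ.zero_mem⟩
  add_mem' := fun ⟨h, hΓ, hΔ⟩ ⟨h', hΓ', hΔ'⟩ ↦
    ⟨h + h', fun i hi ↦ Γ.add_mem (hΓ i hi) (hΓ' i hi), Δ.add_mem hΔ hΔ'⟩
  smul_mem' := fun c _ ⟨h, hΓ, hΔ⟩ ↦
    ⟨c • h, fun i hi ↦ Γ.smul_mem c (hΓ i hi), Δ.smul_mem c hΔ⟩

variable {Γ : Submodule A ((ℕ → M) × N)} {Δ : Submodule A ((ℕ → N) × L)}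

theorem mem_baseChangeComp {d : ℕ} {q : ℕ → M} {l : L} : (q, l) ∈ baseChangeComp d Γ Δ ↔
    ∃ h : ℕ → N, (∀ i < d, (slice d i q, h i) ∈ Γ) ∧ (h, l) ∈ Δ :=
  Iff.rfl

end BaseChange

/-- `Γ` is the graph of the reduction map `Q → Q / tQ ≅ N` of an `A[[t]]`-lattice
`Q ⊆ M[[t]]` with `t ^ s M[[t]] ⊆ tQ`, that is, of a one-parameter formal degeneration of `M` to
`N`. Power series are encoded as sequences `q : ℕ → M`, so that `q ∈ tQ` reads
`q 0 = 0 ∧ q ∘ Nat.succ ∈ Q`. -/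
structure IsReductionGraph {A : Type*} [Ring A] {M N : Type*} [AddCommGroup M] [Module A M]
    [AddCommGroup N] [Module A N] (Γ : Submodule A ((ℕ → M) × N)) (s : ℕ) : Prop where
  eq_zero_of_mem : ∀ n, (0, n) ∈ Γ → n = 0
  exists_mem : ∀ n, ∃ q, (q, n) ∈ Γ
  mem_zero_iff : ∀ q, (q, 0) ∈ Γ ↔ q 0 = 0 ∧ ∃ n, (q ∘ Nat.succ, n) ∈ Γ
  mem_zero_of_vanish : ∀ q : ℕ → M, (∀ i < s, q i = 0) → (q, 0) ∈ Γ

theorem DegLE.exists_isReductionGraph {A : Type u} [Ring A] [IsArtinianRing A] {M N : Type u}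
    [AddCommGroup M] [Module A M] [AddCommGroup N] [Module A N] (h : DegLE A M N) :
    ∃ (Γ : Submodule A ((ℕ → M) × N)) (s : ℕ), IsReductionGraph Γ s := by
  obtain ⟨Z, _, _, f, a, b, ⟨s, hb⟩, hf, hab, hfab⟩ := h.exists_isNilpotent
  let θ := hornerEval a b s
  have θ_eq (q : ℕ → M) : θ q = a.coprod b (q 0, θ (q ∘ Nat.succ)) :=
    hornerEval_eq_of_pow_eq_zero hb q
  -- The lattice is `ker θ`, and `q ∈ ker θ` reduces to the `n` with
  -- `f n = (q 0, θ (t⁻¹ (q - q 0)))`.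
  let Γ : Submodule A ((ℕ → M) × N) := LinearMap.eqLocus (f ∘ₗ .snd A (ℕ → M) N)
    ((LinearMap.prod (.proj 0) (θ ∘ₗ .funLeft A M Nat.succ)) ∘ₗ .fst A (ℕ → M) N)
  have mem_Γ (q : ℕ → M) (n : N) : (q, n) ∈ Γ ↔ f n = (q 0, θ (q ∘ Nat.succ)) := Iff.rfl
  have exists_mem_iff (q : ℕ → M) : (∃ n, (q, n) ∈ Γ) ↔ θ q = 0 := by
    rw [θ_eq, hfab]
    rfl
  have mem_zero_iff (q : ℕ → M) : (q, 0) ∈ Γ ↔ q 0 = 0 ∧ θ (q ∘ Nat.succ) = 0 := by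
    rw [mem_Γ, map_zero, eq_comm, Prod.mk_eq_zero]
  refine ⟨Γ, s + 1, fun n hn ↦ (map_eq_zero_iff f hf).1 ?_, fun n ↦ ?_, fun q ↦ ?_, fun q hq ↦ ?_⟩
  · rw [(mem_Γ 0 n).1 hn]
    exact Prod.ext rfl (map_zero θ)
  · obtain ⟨q, hq⟩ := hornerEval_surjective hab hb (f n).2
    exact ⟨seqCons A ((f n).1, q), (mem_Γ _ _).2 (Prod.ext rfl hq.symm)⟩
  · rw [mem_zero_iff, exists_mem_iff]
  · exact (mem_zero_iff q).2 ⟨hq 0 s.succ_pos,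
      hornerEval_eq_zero a b fun i hi ↦ hq (i + 1) (Nat.succ_lt_succ hi)⟩

namespace IsReductionGraph

section

variable {A : Type*} [Ring A] {M N L : Type*} [AddCommGroup M] [Module A M] [AddCommGroup N]
  [Module A N] [AddCommGroup L] [Module A L] {Γ : Submodule A ((ℕ → M) × N)} {s : ℕ}

theorem mem_of_eqOn (hΓ : IsReductionGraph Γ s) {p q : ℕ → M} {n : N} (hp : (p, n) ∈ Γ)
    (hpq : ∀ i < s, q i = p i) : (q, n) ∈ Γ := by
  have hsub : (q - p, 0) ∈ Γ := hΓ.mem_zero_of_vanish _ fun i hi ↦ sub_eq_zero.2 (hpq i hi)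
  simpa using Γ.add_mem hsub hp

theorem eq_zero_iff (hΓ : IsReductionGraph Γ s) {q : ℕ → M} {n : N} (h : (q, n) ∈ Γ) :
    n = 0 ↔ (q, 0) ∈ Γ := by
  refine ⟨fun hn ↦ hn ▸ h, fun h₀ ↦ hΓ.eq_zero_of_mem n ?_⟩
  simpa using Γ.sub_mem h h₀

theorem finite_quotient [Module.Finite A M] (hΓ : IsReductionGraph Γ s) :
    Module.Finite A ((ℕ → M) ⧸ Γ.map (LinearMap.fst A (ℕ → M) N)) := by
  let extend : (Fin s → M) →ₗ[A] (ℕ → M) :=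
    LinearMap.pi fun i ↦ if h : i < s then LinearMap.proj ⟨i, h⟩ else 0
  refine .of_surjective (Submodule.mkQ _ ∘ₗ extend) fun z ↦ ?_
  obtain ⟨q, rfl⟩ := Submodule.mkQ_surjective _ z
  refine ⟨fun i ↦ q i, (Submodule.Quotient.eq _).2 ⟨(_, 0), hΓ.mem_of_eqOn Γ.zero_mem ?_, rfl⟩⟩
  intro i hi
  exact sub_eq_zero.2 (by simp [extend, hi])

variable {Δ : Submodule A ((ℕ → N) × L)} {r : ℕ}

theorem exists_comp_succ_mem_baseChangeComp (hΓ : IsReductionGraph Γ s)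
    (hΔ : IsReductionGraph Δ r) {q : ℕ → M} (hq : (q, 0) ∈ baseChangeComp (r + 1) Γ Δ) :
    q 0 = 0 ∧ ∃ l, (q ∘ Nat.succ, l) ∈ baseChangeComp (r + 1) Γ Δ := by
  obtain ⟨h, hslice, hh⟩ := mem_baseChangeComp.1 hq
  obtain ⟨h_zero, l, hl⟩ := (hΔ.mem_zero_iff h).1 hh
  obtain ⟨q_zero, n, hn⟩ := (hΓ.mem_zero_iff (slice (r + 1) 0 q)).1 (h_zero ▸ hslice 0 r.succ_pos)
  rw [← slice_self] at hn
  -- The last slice of `q ∘ Nat.succ` reduces to `n` rather than to `h (r + 1)`, but `Δ` does not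
  -- see the coefficient of index `r`.
  refine ⟨q_zero, l, mem_baseChangeComp.2 ⟨Function.update (h ∘ Nat.succ) r n, fun i hi ↦ ?_,
    hΔ.mem_of_eqOn hl fun i hi ↦ Function.update_of_ne hi.ne _ _⟩⟩
  rw [slice_comp_succ]
  obtain rfl | hir := eq_or_ne i r
  · rwa [Function.update_self]
  · rw [Function.update_of_ne hir]
    exact hslice (i + 1) (by lia)

theorem mem_baseChangeComp_zero (hΓ : IsReductionGraph Γ s)
    (hΔ : IsReductionGraph Δ r) {d : ℕ} {q : ℕ → M} {l : L} (hq_zero : q 0 = 0)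
    (hq : (q ∘ Nat.succ, l) ∈ baseChangeComp (d + 1) Γ Δ) :
    (q, 0) ∈ baseChangeComp (d + 1) Γ Δ := by
  obtain ⟨h, hslice, hh⟩ := mem_baseChangeComp.1 hq
  simp only [slice_comp_succ] at hslice
  refine mem_baseChangeComp.2 ⟨seqCons A (0, h), fun i hi ↦ ?_, (hΔ.mem_zero_iff _).2 ⟨rfl, l, hh⟩⟩
  cases i with
  | zero =>
    exact (hΓ.mem_zero_iff _).2 ⟨hq_zero, h d, slice_self (d + 1) q ▸ hslice d d.lt_succ_self⟩
  | succ i => exact hslice i (by lia)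

theorem comp (hΓ : IsReductionGraph Γ s) (hΔ : IsReductionGraph Δ r) :
    IsReductionGraph (baseChangeComp (r + 1) Γ Δ) ((r + 1) * s) where
  eq_zero_of_mem l hl := by
    obtain ⟨h, hslice, hh⟩ := mem_baseChangeComp.1 hl
    have h_vanish (i : ℕ) (hi : i < r) : h i = 0 := hΓ.eq_zero_of_mem _ (hslice i (by lia))
    exact hΔ.eq_zero_of_mem l (hΔ.mem_of_eqOn hh fun i hi ↦ (h_vanish i hi).symm)
  exists_mem l := by
    obtain ⟨h, hh⟩ := hΔ.exists_mem l
    choose p hp using hΓ.exists_mem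
    obtain ⟨q, hq⟩ := exists_slice_eq (d := r + 1) fun i ↦ p (h i)
    exact ⟨q, mem_baseChangeComp.2 ⟨h, fun i hi ↦ hq i hi ▸ hp (h i), hh⟩⟩
  mem_zero_iff _ := ⟨exists_comp_succ_mem_baseChangeComp hΓ hΔ,
    fun ⟨hq_zero, _, hq⟩ ↦ mem_baseChangeComp_zero hΓ hΔ hq_zero hq⟩
  mem_zero_of_vanish q hq := by
    refine mem_baseChangeComp.2 ⟨0, fun i hi ↦ hΓ.mem_zero_of_vanish _ fun j hj ↦ hq _ ?_,
      Δ.zero_mem⟩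
    calc i + (r + 1) * j < (r + 1) * (j + 1) := by rw [mul_add]; lia
      _ ≤ (r + 1) * s := Nat.mul_le_mul_left _ hj

end

variable {A : Type u} [Ring A] {M N : Type u} [AddCommGroup M] [Module A M] [AddCommGroup N]
  [Module A N] {Γ : Submodule A ((ℕ → M) × N)} {s : ℕ}

/-- With `Q` the lattice, the sequence is `0 → Q / tQ → M ⊕ M[[t]] / Q → M[[t]] / Q → 0`, whose
first map sends `q` to `(q 0, t⁻¹ (q - q 0))` and whose second map sends `(m, p)` to `m + t p`. -/
theorem degLE [Module.Finite A M] (hΓ : IsReductionGraph Γ s) : DegLE A M N := by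
  let Q : Submodule A (ℕ → M) := Γ.map (.fst A (ℕ → M) N)
  have mem_Q (q : ℕ → M) : q ∈ Q ↔ ∃ n, (q, n) ∈ Γ := by simp [Q]
  let π : Γ →ₗ[A] N := (LinearMap.snd A (ℕ → M) N).domRestrict Γ
  let φ : Γ →ₗ[A] M × ((ℕ → M) ⧸ Q) :=
    (LinearMap.prod (.proj 0) (Q.mkQ ∘ₗ .funLeft A M Nat.succ) ∘ₗ .fst A (ℕ → M) N).domRestrict Γ
  have hπ : Function.Surjective π := fun n ↦ by
    obtain ⟨q, hq⟩ := hΓ.exists_mem n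
    exact ⟨⟨(q, n), hq⟩, rfl⟩
  have hker : LinearMap.ker π = LinearMap.ker φ := by
    ext ⟨⟨q, n⟩, hq⟩
    calc n = 0 ↔ q 0 = 0 ∧ q ∘ Nat.succ ∈ Q := by
          rw [hΓ.eq_zero_iff hq, hΓ.mem_zero_iff, mem_Q]
      _ ↔ (q 0, Q.mkQ (q ∘ Nat.succ)) = 0 := by
          rw [Prod.mk_eq_zero, Submodule.mkQ_apply, Submodule.Quotient.mk_eq_zero]
  obtain ⟨f, hf, hrange⟩ := exists_injective_range_eq hπ hker
  have hQ : ∀ q ∈ Q, seqCons A (0, q) ∈ Q := fun q hq ↦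
    (mem_Q _).2 ⟨0, (hΓ.mem_zero_iff _).2 ⟨rfl, (mem_Q q).1 hq⟩⟩
  refine ⟨_, _, _, hΓ.finite_quotient, f, quotientCons Q hQ, hf, quotientCons_surjective hQ,
    hrange.trans (le_antisymm ?_ ?_)⟩
  · rintro _ ⟨⟨⟨q, n⟩, hq⟩, rfl⟩
    exact (quotientCons_mk_comp_succ hQ q).trans
      ((Submodule.Quotient.mk_eq_zero Q).2 ((mem_Q q).2 ⟨n, hq⟩))
  · rintro ⟨m, z⟩ hz
    obtain ⟨p, rfl⟩ := Q.mkQ_surjective z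
    rw [LinearMap.mem_ker, quotientCons_mk, Submodule.mkQ_apply, Submodule.Quotient.mk_eq_zero,
      mem_Q] at hz
    obtain ⟨n, hn⟩ := hz
    exact ⟨⟨_, hn⟩, rfl⟩

end IsReductionGraph

theorem DegLE.trans {A : Type u} [Ring A] [IsArtinianRing A] {M N L : Type u}
    [AddCommGroup M] [Module A M] [Module.Finite A M] [AddCommGroup N] [Module A N]
    [AddCommGroup L] [Module A L] (hMN : DegLE A M N) (hNL : DegLE A N L) : DegLE A M L := by
  obtain ⟨_, _, hΓ⟩ := hMN.exists_isReductionGraph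
  obtain ⟨_, _, hΔ⟩ := hNL.exists_isReductionGraph
  exact (hΓ.comp hΔ).degLE

theorem stable_degeneration_trans_general {A : Type u} [Ring A] [IsArtinianRing A]
    {X Y Z : Type u} [AddCommGroup X] [Module A X] [Module.Finite A X]
    [AddCommGroup Y] [Module A Y] [AddCommGroup Z] [Module A Z]
    (hXY : StDegLE A X Y) (hYZ : StDegLE A Y Z) : StDegLE A X Z := by
  obtain ⟨P, _, _, Q, _, _, _, _, _, _, hPQ⟩ := hXY
  obtain ⟨R, _, _, S, _, _, _, _, _, _, hRS⟩ := hYZ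
  have hleft : DegLE A (X × P × R) (Y × Q × R) :=
    (hPQ.prod_right R).congr (.prodAssoc A X P R) (.prodAssoc A Y Q R)
  have hright : DegLE A (Y × Q × R) (Z × S × Q) :=
    (hRS.prod_right Q).congr
      ((LinearEquiv.prodAssoc A Y R Q).trans ((LinearEquiv.refl A Y).prodCongr (.prodComm A R Q)))
      (.prodAssoc A Z S Q)
  exact ⟨P × R, _, _, S × Q, _, _, inferInstance, inferInstance, inferInstance, inferInstance,
    hleft.trans hright⟩

/-- Transitivity of stable degeneration. -/
theorem stable_degeneration_trans
    (k : Type u) [Field k] (A : Type u) [Ring A] [Algebra k A] [FiniteDimensional k A]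
    (X : Type u) [AddCommGroup X] [Module A X] [Module.Finite A X]
    (Y : Type u) [AddCommGroup Y] [Module A Y] [Module.Finite A Y]
    (Z : Type u) [AddCommGroup Z] [Module A Z] [Module.Finite A Z]
    (hXY : StDegLE A X Y) (hYZ : StDegLE A Y Z) :
    StDegLE A X Z := by
  have : IsArtinianRing A := IsArtinianRing.of_finite k A
  exact stable_degeneration_trans_general hXY hYZ
end

section
/- Antisymmetry of stable degeneration up to stable isomorphism: let X and Y be finitely generated left A-modules over a finite-dimensional k-algebra A. If X ≤_st Y and Y ≤_st X, then X and Y are stably isomorphic, i.e., there exist finitely generated projective A-modules P and Q such that X ⊕ P ≅ Y ⊕ Q as A-modules. -/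
universe u

/-!
The length of `Ext¹(-, U)` over the base ring is additive on direct sums and vanishes on projective
modules, and an exact sequence `0 → N → M ⊕ Z → Z → 0` shows that it increases from `M` to `N`. If
`X` and `Y` stably degenerate to each other, all these lengths therefore agree. For a sequence
`0 → N → M ⊕ Z → Z → 0` witnessing `X ⊕ P ≤_deg Y ⊕ Q`, equality at `U = N` makes
`Ext¹(Z, N) → Ext¹(M ⊕ Z, N)` injective. This map kills the class of the sequence, so the sequence
splits: `M ⊕ Z ≅ N ⊕ Z`. Finally `Z` cancels, because modules of finite length are cancellable.
-/

section Cancellation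

/-- Bass's stable range condition `sr(R) = 1`: if `aR + bR = R`, then `a + b t` is a unit for
some `t`. -/
def HasStableRangeOne (R : Type*) [Ring R] : Prop :=
  ∀ a b x y : R, a * x + b * y = 1 → ∃ t, IsUnit (a + b * t)

theorem HasStableRangeOne.of_subsingleton (R : Type*) [Ring R] [Subsingleton R] :
    HasStableRangeOne R :=
  fun _ _ _ _ _ => ⟨0, isUnit_of_subsingleton _⟩

theorem isDedekindFiniteMonoid_of_isLocalRing (R : Type*) [Ring R] [IsLocalRing R] :
    IsDedekindFiniteMonoid R where
  mul_eq_one_symm {a b} hab := by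
    have hidem : b * a * (b * a) = b * a := by
      rw [mul_assoc, ← mul_assoc a, hab, one_mul]
    rcases IsLocalRing.isUnit_or_isUnit_of_add_one (add_sub_cancel (b * a) 1) with h | h
    · exact h.mul_left_cancel (by rw [hidem, mul_one])
    · have ha : a = 0 := by
        refine h.mul_left_eq_zero.1 ?_
        rw [mul_sub, mul_one, ← mul_assoc, hab, one_mul, sub_self]
      exact absurd hab (by simp [ha])

theorem HasStableRangeOne.of_isLocalRing (R : Type*) [Ring R] [IsLocalRing R] :
    HasStableRangeOne R := by
  have := isDedekindFiniteMonoid_of_isLocalRing R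
  intro a b x y h
  rcases IsLocalRing.isUnit_or_isUnit_of_add_one h with hax | hby
  · exact ⟨0, by simpa using isUnit_of_mul_isUnit_left hax⟩
  · obtain ⟨u, rfl⟩ := isUnit_of_mul_isUnit_left hby
    exact ⟨↑u⁻¹ * (1 - a), by simp⟩

section

variable {A M N Z W : Type*} [Ring A] [AddCommGroup M] [Module A M] [AddCommGroup N] [Module A N]
  [AddCommGroup Z] [Module A Z] [AddCommGroup W] [Module A W]

-- A corner of an invertible block matrix is invertible iff the opposite corner of the inverse is.
theorem nonempty_linearEquiv_of_bijective_fst (φ : (Z × M) ≃ₗ[A] (W × N))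
    (h : Function.Bijective fun z => (φ (z, 0)).1) : Nonempty (M ≃ₗ[A] N) := by
  let ψ : N →ₗ[A] M := LinearMap.snd A Z M ∘ₗ φ.symm.toLinearMap ∘ₗ LinearMap.inr A W N
  have hψ (n : N) : ψ n = (φ.symm (0, n)).2 := rfl
  refine ⟨(LinearEquiv.ofBijective ψ ⟨(injective_iff_map_eq_zero ψ).2 fun n hn => ?_,
    fun m => ?_⟩).symm⟩
  · obtain ⟨⟨z, m⟩, hzm⟩ := φ.surjective (0, n)
    obtain rfl : m = 0 := by rwa [hψ, ← hzm, φ.symm_apply_apply] at hn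
    have hz : z = 0 := h.injective (by simp only [hzm, Prod.mk_zero_zero, map_zero, Prod.fst_zero])
    simpa only [hz, Prod.mk_zero_zero, map_zero, Prod.snd_zero] using (congrArg Prod.snd hzm).symm
  · obtain ⟨z, hz⟩ := h.surjective (-(φ (0, m)).1)
    refine ⟨(φ (z, m)).2, ?_⟩
    have hsplit : φ (z, m) = φ (z, 0) + φ (0, m) := by simp [← map_add]
    have hfst : (φ (z, m)).1 = 0 := by simp_all
    rw [hψ, ← hfst, Prod.mk.eta, φ.symm_apply_apply]

theorem HasStableRangeOne.nonempty_linearEquiv (hZ : HasStableRangeOne (Module.End A Z))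
    (φ : (Z × M) ≃ₗ[A] (Z × N)) : Nonempty (M ≃ₗ[A] N) := by
  let a : Module.End A Z := LinearMap.fst A Z N ∘ₗ φ.toLinearMap ∘ₗ LinearMap.inl A Z M
  let b : M →ₗ[A] Z := LinearMap.fst A Z N ∘ₗ φ.toLinearMap ∘ₗ LinearMap.inr A Z M
  let x : Module.End A Z := LinearMap.fst A Z M ∘ₗ φ.symm.toLinearMap ∘ₗ LinearMap.inl A Z N
  let y : Z →ₗ[A] M := LinearMap.snd A Z M ∘ₗ φ.symm.toLinearMap ∘ₗ LinearMap.inl A Z N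
  have hfst (z : Z) (m : M) : (φ (z, m)).1 = a z + b m := by
    simp [a, b, ← Prod.fst_add, ← map_add]
  have hone : a * x + (b ∘ₗ y) * 1 = 1 := by
    ext z
    change a (φ.symm (z, 0)).1 + b (φ.symm (z, 0)).2 = z
    rw [← hfst, Prod.mk.eta, φ.apply_symm_apply]
  obtain ⟨t, ht⟩ := hZ a (b ∘ₗ y) x 1 hone
  -- Evans' trick: precomposing `φ` with this shear turns its corner `a` into the unit `a + b y t`.
  let shear : (Z × M) ≃ₗ[A] (Z × M) :=
    (LinearEquiv.refl A Z).skewProd (LinearEquiv.refl A M) (y ∘ₗ t)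
  refine nonempty_linearEquiv_of_bijective_fst (shear.trans φ) ?_
  convert (Module.End.isUnit_iff _).1 ht using 2 with z
  simp [shear, hfst]

end

universe v

/-- Cancellability of `Z` in direct sums of modules in the universe of `Z`. -/
def IsCancellable (A : Type*) [Ring A] (Z : Type v) [AddCommGroup Z] [Module A Z] : Prop :=
  ∀ (M N : Type v) [AddCommGroup M] [Module A M] [AddCommGroup N] [Module A N],
    ((Z × M) ≃ₗ[A] (Z × N)) → Nonempty (M ≃ₗ[A] N)

variable {A : Type*} [Ring A] {Z W : Type v} [AddCommGroup Z] [Module A Z]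
  [AddCommGroup W] [Module A W]

theorem HasStableRangeOne.isCancellable (hZ : HasStableRangeOne (Module.End A Z)) :
    IsCancellable A Z :=
  fun _ _ _ _ _ _ φ => hZ.nonempty_linearEquiv φ

theorem IsCancellable.of_linearEquiv (hZ : IsCancellable A Z) (e : Z ≃ₗ[A] W) :
    IsCancellable A W := fun M N _ _ _ _ φ =>
  hZ M N (e.prodCongr (.refl A M) ≪≫ₗ φ ≪≫ₗ e.symm.prodCongr (.refl A N))

theorem IsCancellable.prod (hZ : IsCancellable A Z) (hW : IsCancellable A W) :
    IsCancellable A (Z × W) := fun M N _ _ _ _ φ => by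
  obtain ⟨ψ⟩ := hZ _ _
    ((LinearEquiv.prodAssoc A Z W M).symm ≪≫ₗ φ ≪≫ₗ LinearEquiv.prodAssoc A Z W N)
  exact hW M N ψ

theorem isLocalRing_end_of_forall_isCompl [Nontrivial Z] [IsArtinian A Z] [IsNoetherian A Z]
    (hZ : ∀ p q : Submodule A Z, IsCompl p q → p = ⊥ ∨ q = ⊥) :
    IsLocalRing (Module.End A Z) := by
  refine IsLocalRing.of_isUnit_or_isUnit_one_sub_self fun f => ?_
  obtain ⟨n, hn⟩ := Filter.eventually_atTop.1 f.eventually_isCompl_ker_pow_range_pow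
  have hcompl := hn (n + 1) n.le_succ
  rcases hZ _ _ hcompl with hker | hrange
  · have hrange := eq_top_of_bot_isCompl (hker ▸ hcompl)
    exact .inl <| (isUnit_pow_succ_iff (n := n)).1 <| (Module.End.isUnit_iff _).2
      ⟨LinearMap.ker_eq_bot.1 hker, LinearMap.range_eq_top.1 hrange⟩
  · have hnil : IsNilpotent f := ⟨n + 1, LinearMap.range_eq_bot.1 hrange⟩
    exact .inr hnil.isUnit_one_sub

theorem isCancellable_of_isArtinian_of_isNoetherian [IsArtinian A Z] [IsNoetherian A Z] :
    IsCancellable A Z := by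
  induction hl : Module.length A Z using WellFoundedLT.induction generalizing Z with
  | _ l ih =>
  subst hl
  rcases subsingleton_or_nontrivial Z with hZ | hZ
  · exact (HasStableRangeOne.of_subsingleton _).isCancellable
  by_cases hindec : ∀ p q : Submodule A Z, IsCompl p q → p = ⊥ ∨ q = ⊥
  · have := isLocalRing_end_of_forall_isCompl hindec
    exact (HasStableRangeOne.of_isLocalRing _).isCancellable
  push Not at hindec
  obtain ⟨p, q, hpq, hp, hq⟩ := hindec
  have hp_top : p ≠ ⊤ := fun h => hq (eq_bot_of_top_isCompl (h ▸ hpq))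
  have hq_top : q ≠ ⊤ := fun h => hp (eq_bot_of_isCompl_top (h ▸ hpq))
  have hp_canc : IsCancellable A p := ih _ (Submodule.length_lt hp_top) rfl
  have hq_canc : IsCancellable A q := ih _ (Submodule.length_lt hq_top) rfl
  exact (hp_canc.prod hq_canc).of_linearEquiv (Submodule.prodEquivOfIsCompl p q hpq)

end Cancellation

section Length

variable {R M N P : Type*} [Ring R] [AddCommGroup M] [Module R M] [AddCommGroup N] [Module R N]
  [AddCommGroup P] [Module R P]

theorem length_eq_length_ker_add_length_range (f : M →ₗ[R] N) :
    Module.length R M = Module.length R (LinearMap.ker f) + Module.length R (LinearMap.range f) :=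
  Module.length_eq_add_of_exact (LinearMap.ker f).subtype f.rangeRestrict
    (Submodule.injective_subtype _) f.surjective_rangeRestrict
    (LinearMap.exact_iff.2 (by simp))

variable {f : M →ₗ[R] N} {g : N →ₗ[R] P}

theorem length_le_length_range_add_of_exact (h : Function.Exact f g) :
    Module.length R N ≤ Module.length R (LinearMap.range f) + Module.length R P := by
  rw [length_eq_length_ker_add_length_range g, h.linearMap_ker_eq]
  gcongr
  exact Module.length_le_of_injective _ (Submodule.injective_subtype _)

theorem length_le_length_add_length_of_exact (h : Function.Exact f g) :
    Module.length R N ≤ Module.length R M + Module.length R P := by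
  refine (length_le_length_range_add_of_exact h).trans ?_
  gcongr
  exact Module.length_le_of_surjective _ f.surjective_rangeRestrict

theorem injective_of_exact_of_length_add_length_le (h : Function.Exact f g)
    (hM : Module.length R M ≠ ⊤) (hP : Module.length R P ≠ ⊤)
    (hle : Module.length R M + Module.length R P ≤ Module.length R N) :
    Function.Injective f := by
  have hrange : Module.length R (LinearMap.range f) ≠ ⊤ :=
    ne_top_of_le_ne_top hM (Module.length_le_of_surjective _ f.surjective_rangeRestrict)
  have hM_le : Module.length R M ≤ Module.length R (LinearMap.range f) :=
    (ENat.add_le_add_iff_right hP).1 (hle.trans (length_le_length_range_add_of_exact h))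
  have hker : Module.length R (LinearMap.ker f) = 0 := by
    rw [length_eq_length_ker_add_length_range f] at hM_le
    exact nonpos_iff_eq_zero.1 ((ENat.add_le_add_iff_right hrange).1 (by rwa [zero_add]))
  rwa [Module.length_eq_zero_iff, Submodule.subsingleton_iff_eq_bot, LinearMap.ker_eq_bot] at hker

end Length

section Ext

open CategoryTheory CategoryTheory.Abelian

variable (R : Type*) [CommRing R] {A : Type u} [Ring A] [Algebra R A]

/-- The `R`-linear structure on the category of modules over an `R`-algebra; Mathlib has it only
for a field `R`. -/
noncomputable abbrev linearModuleCat : Linear R (ModuleCat.{u} A) where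
  homModule _ N :=
    letI := Module.restrictScalars R A N
    haveI := IsScalarTower.restrictScalars R A N
    inferInstance
  smul_comp _ _ _ r f g :=
    ModuleCat.hom_ext (LinearMap.ext fun x => g.hom.map_smul (algebraMap R A r) (f x))

attribute [local instance] linearModuleCat

section

variable (A) (M N : Type u) [AddCommGroup M] [Module A M] [AddCommGroup N] [Module A N]
  [Module.Finite A M] [Module.Finite A N] [Module.Finite R A] [IsNoetherianRing R]

theorem finite_moduleCat_hom : Module.Finite R (ModuleCat.of A M ⟶ ModuleCat.of A N) := by
  let := Module.restrictScalars R A M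
  let := Module.restrictScalars R A N
  have := IsScalarTower.restrictScalars R A M
  have := IsScalarTower.restrictScalars R A N
  have : Module.Finite R M := Module.Finite.trans A M
  have : Module.Finite R N := Module.Finite.trans A N
  let restrict : (ModuleCat.of A M ⟶ ModuleCat.of A N) →ₗ[R] (M →ₗ[R] N) :=
    { toFun f := f.hom.restrictScalars R
      map_add' _ _ := rfl
      map_smul' _ _ := rfl }
  exact Module.Finite.of_injective restrict fun f g h => by
    ext x
    exact LinearMap.congr_fun h x

theorem finite_ext (n : ℕ) :
    Module.Finite R (Ext (ModuleCat.of A M) (ModuleCat.of A N) n) := by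
  induction n generalizing M with
  | zero =>
    have := finite_moduleCat_hom R A M N
    exact Module.Finite.equiv
      (Ext.linearEquiv₀ (R := R) (X := ModuleCat.of A M) (Y := ModuleCat.of A N)).symm
  | succ n ih =>
    have : IsNoetherianRing A := .of_finite R A
    obtain ⟨m, f, hf⟩ := Module.Finite.exists_fin' A M
    have hS := LinearMap.shortExact_shortComplexKer hf
    have hproj : Projective f.shortComplexKer.X₂ :=
      (IsProjective.iff_projective (R := A) (Fin m → A)).1 inferInstance
    have := ih (LinearMap.ker f)
    refine Module.Finite.of_surjective
      (hS.extClass.precompOfLinear R (ModuleCat.of A N) (add_comm 1 n)) fun x => ?_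
    exact Ext.contravariant_sequence_exact₃ hS _ x (Ext.eq_zero_of_projective _) (add_comm 1 n)

end

variable (U : Type u) [AddCommGroup U] [Module A U] {M N L : Type u} [AddCommGroup M] [Module A M]
  [AddCommGroup N] [Module A N] [AddCommGroup L] [Module A L]

/-- The map `Ext¹(f, U) : Ext¹(N, U) → Ext¹(M, U)` induced by `f : M → N`. -/
noncomputable def extMap (f : M →ₗ[A] N) :
    Ext (ModuleCat.of A N) (ModuleCat.of A U) 1 →ₗ[R]
      Ext (ModuleCat.of A M) (ModuleCat.of A U) 1 :=
  (Ext.mk₀ (ModuleCat.ofHom f)).precompOfLinear R _ (zero_add 1)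

theorem extMap_apply (f : M →ₗ[A] N) (x : Ext (ModuleCat.of A N) (ModuleCat.of A U) 1) :
    extMap R U f x = (Ext.mk₀ (ModuleCat.ofHom f)).comp x (zero_add 1) :=
  rfl

theorem extMap_leftInverse {f : M →ₗ[A] N} {g : N →ₗ[A] M} (h : g ∘ₗ f = LinearMap.id) :
    Function.LeftInverse (extMap R U f) (extMap R U g) := fun x => by
  rw [extMap_apply, extMap_apply, Ext.mk₀_comp_mk₀_assoc, ← ModuleCat.ofHom_comp, h,
    ModuleCat.ofHom_id, Ext.mk₀_id_comp]

theorem shortExact_of_exact {f : N →ₗ[A] M} {g : M →ₗ[A] L} (hf : Function.Injective f)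
    (hg : Function.Surjective g) (h : Function.Exact f g) :
    (ModuleCat.shortComplexOfCompEqZero f g h.linearMap_comp_eq_zero).ShortExact :=
  ModuleCat.shortComplex_shortExact _ h hf hg

theorem exact_extMap {f : N →ₗ[A] M} {g : M →ₗ[A] L} (hf : Function.Injective f)
    (hg : Function.Surjective g) (h : Function.Exact f g) :
    Function.Exact (extMap R U g) (extMap R U f) := by
  have hS := shortExact_of_exact hf hg h
  refine fun x => ⟨fun hx => Ext.contravariant_sequence_exact₂ hS _ x hx, ?_⟩
  rintro ⟨y, rfl⟩
  rw [extMap_apply, extMap_apply, Ext.mk₀_comp_mk₀_assoc, ← ModuleCat.ofHom_comp,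
    h.linearMap_comp_eq_zero, ModuleCat.ofHom_zero, Ext.mk₀_zero, Ext.zero_comp]

variable {R} in
theorem nonempty_linearEquiv_of_injective_extMap {f : N →ₗ[A] M} {g : M →ₗ[A] L}
    (hf : Function.Injective f) (hg : Function.Surjective g) (h : Function.Exact f g)
    (hinj : Function.Injective (extMap R N g)) : Nonempty (M ≃ₗ[A] (N × L)) := by
  have hS := shortExact_of_exact hf hg h
  have hclass : hS.extClass = 0 := (injective_iff_map_eq_zero _).1 hinj _ hS.comp_extClass
  obtain ⟨r, hr⟩ := Ext.contravariant_sequence_exact₁ hS _ (Ext.mk₀ (𝟙 (ModuleCat.of A N)))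
    (add_zero 1) (by rw [hclass, Ext.zero_comp])
  obtain ⟨ρ, rfl⟩ := (Ext.mk₀_bijective _ _).2 r
  rw [Ext.mk₀_comp_mk₀] at hr
  have hretract : ρ.hom ∘ₗ f = LinearMap.id :=
    congrArg ModuleCat.Hom.hom ((Ext.mk₀_bijective _ _).1 hr)
  exact ⟨(h.splitInjectiveEquiv hg ⟨ρ.hom, hretract⟩).1⟩

variable (A) in
/-- The `R`-length of `Ext¹(M, U)`. -/
noncomputable def extLength (M : Type u) [AddCommGroup M] [Module A M] : ℕ∞ :=
  Module.length R (Ext (ModuleCat.of A M) (ModuleCat.of A U) 1)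

variable (M N)

theorem extLength_ne_top [IsArtinianRing R] [Module.Finite R A] [Module.Finite A M]
    [Module.Finite A U] : extLength R A U M ≠ ⊤ := by
  have := finite_ext R A M U 1
  exact Module.length_ne_top

theorem extLength_prod : extLength R A U (M × N) = extLength R A U M + extLength R A U N := by
  have hexact := exact_extMap R U LinearMap.inl_injective LinearMap.snd_surjective
    (Function.Exact.inl_snd (R := A) (M := M) (N := N))
  rw [add_comm]
  exact Module.length_eq_add_of_exact _ _
    (extMap_leftInverse R U (LinearMap.snd_comp_inr A M N)).injective
    (extMap_leftInverse R U (LinearMap.fst_comp_inl A M N)).surjective hexact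

theorem extLength_of_projective [Module.Projective A M] : extLength R A U M = 0 := by
  have : Projective (ModuleCat.of A M) := (IsProjective.iff_projective (R := A) M).1 inferInstance
  have : Subsingleton (Ext (ModuleCat.of A M) (ModuleCat.of A U) 1) :=
    subsingleton_of_forall_eq 0 Ext.eq_zero_of_projective
  exact Module.length_eq_zero

theorem extLength_prod_of_projective [Module.Projective A N] :
    extLength R A U (M × N) = extLength R A U M := by
  rw [extLength_prod, extLength_of_projective R U N, add_zero]

variable {M N}

theorem extLength_le_add_of_exact {f : N →ₗ[A] M} {g : M →ₗ[A] L} (hf : Function.Injective f)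
    (hg : Function.Surjective g) (h : Function.Exact f g) :
    extLength R A U M ≤ extLength R A U L + extLength R A U N :=
  length_le_length_add_length_of_exact (exact_extMap R U hf hg h)

theorem nonempty_linearEquiv_of_extLength_add_le [IsArtinianRing R] [Module.Finite R A]
    [Module.Finite A N] [Module.Finite A L] {f : N →ₗ[A] M} {g : M →ₗ[A] L}
    (hf : Function.Injective f) (hg : Function.Surjective g) (h : Function.Exact f g)
    (hle : extLength R A N L + extLength R A N N ≤ extLength R A N M) :
    Nonempty (M ≃ₗ[A] (N × L)) :=
  nonempty_linearEquiv_of_injective_extMap hf hg h <|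
    injective_of_exact_of_length_add_length_le (exact_extMap R N hf hg h)
      (extLength_ne_top R N L) (extLength_ne_top R N N) hle

end Ext

section Degeneration

variable (R : Type*) [CommRing R] [IsArtinianRing R] {A : Type u} [Ring A] [Algebra R A]
  [Module.Finite R A] {M N : Type u} [AddCommGroup M] [Module A M] [AddCommGroup N] [Module A N]

theorem DegLE.extLength_le (h : DegLE A M N) (U : Type u) [AddCommGroup U] [Module A U]
    [Module.Finite A U] : extLength R A U M ≤ extLength R A U N := by
  obtain ⟨Z, _, _, _, f, g, hf, hg, hfg⟩ := h
  have hle : extLength R A U M + extLength R A U Z ≤ extLength R A U N + extLength R A U Z := by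
    rw [← extLength_prod, add_comm (extLength R A U N)]
    exact extLength_le_add_of_exact R U hf hg (LinearMap.exact_iff.2 hfg.symm)
  exact (ENat.add_le_add_iff_right (extLength_ne_top R U Z)).1 hle

theorem StDegLE.extLength_le (h : StDegLE A M N) (U : Type u) [AddCommGroup U] [Module A U]
    [Module.Finite A U] : extLength R A U M ≤ extLength R A U N := by
  obtain ⟨P, _, _, Q, _, _, _, _, _, _, hdeg⟩ := h
  simpa only [extLength_prod_of_projective] using hdeg.extLength_le R U

theorem DegLE.nonempty_linearEquiv [Module.Finite A N] (h : DegLE A M N)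
    (hle : extLength R A N N ≤ extLength R A N M) : Nonempty (M ≃ₗ[A] N) := by
  obtain ⟨Z, _, _, _, f, g, hf, hg, hfg⟩ := h
  have hlength : extLength R A N Z + extLength R A N N ≤ extLength R A N (M × Z) := by
    rw [extLength_prod, add_comm]
    gcongr
  obtain ⟨e⟩ := nonempty_linearEquiv_of_extLength_add_le R hf hg
    (LinearMap.exact_iff.2 hfg.symm) hlength
  have : IsArtinianRing A := .of_finite R A
  have : IsNoetherianRing A := .of_finite R A
  have hcancel : IsCancellable A Z := isCancellable_of_isArtinian_of_isNoetherian
  exact hcancel M N (.prodComm A Z M ≪≫ₗ e ≪≫ₗ .prodComm A N Z)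

end Degeneration

theorem stable_degeneration_antisymm_general
    (R : Type*) [CommRing R] [IsArtinianRing R] (A : Type u) [Ring A] [Algebra R A]
    [Module.Finite R A] (X : Type u) [AddCommGroup X] [Module A X]
    (Y : Type u) [AddCommGroup Y] [Module A Y] [Module.Finite A Y]
    (hXY : StDegLE A X Y) (hYX : StDegLE A Y X) :
    ∃ (P : Type u) (_ : AddCommGroup P) (_ : Module A P)
      (Q : Type u) (_ : AddCommGroup Q) (_ : Module A Q),
      Module.Finite A P ∧ Module.Projective A P ∧
      Module.Finite A Q ∧ Module.Projective A Q ∧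
      Nonempty ((X × P) ≃ₗ[A] (Y × Q)) := by
  obtain ⟨P, _, _, Q, _, _, hP, hP', hQ, hQ', hdeg⟩ := hXY
  have hle : extLength R A (Y × Q) (Y × Q) ≤ extLength R A (Y × Q) (X × P) := by
    simpa only [extLength_prod_of_projective] using hYX.extLength_le R (Y × Q)
  exact ⟨P, _, _, Q, _, _, hP, hP', hQ, hQ', hdeg.nonempty_linearEquiv R hle⟩

/-- Antisymmetry of stable degeneration up to stable isomorphism. -/
theorem stable_degeneration_antisymm
    (k : Type u) [Field k] (A : Type u) [Ring A] [Algebra k A] [FiniteDimensional k A]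
    (X : Type u) [AddCommGroup X] [Module A X] [Module.Finite A X]
    (Y : Type u) [AddCommGroup Y] [Module A Y] [Module.Finite A Y]
    (hXY : StDegLE A X Y) (hYX : StDegLE A Y X) :
    ∃ (P : Type u) (_ : AddCommGroup P) (_ : Module A P)
      (Q : Type u) (_ : AddCommGroup Q) (_ : Module A Q),
      Module.Finite A P ∧ Module.Projective A P ∧
      Module.Finite A Q ∧ Module.Projective A Q ∧
      Nonempty ((X × P) ≃ₗ[A] (Y × Q)) := by
  exact stable_degeneration_antisymm_general k A X Y hXY hYX
end

section
/- Cancellation of projectives under degeneration: let X be a finitely generated left A-module over a finite-dimensional k-algebra A, and let P and Q be finitely generated projective A-modules. If X ⊕ P ≤_deg X ⊕ Q, then P ≅ Q as A-modules. -/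
universe u

/-! Over an Artinian ring, let `0 → N → M × Z → Z → 0` be exact. Every semisimple quotient of `M` is
a quotient of `N`: if `W` is a semisimple quotient of `M × Z`, then the image of `N` in `W` has a
complement, which is a quotient of `Z`, so `N × Z` surjects onto `W`. Take `W` to be the product of
the given quotient of `M` and the head `Z / rad Z`, and cancel the head, which is semisimple of
finite length. Its simple factors `T` cancel one at a time: if `(a, b) : T × M → T` is surjective
and `M` is semisimple, then `a + b ∘ y` is invertible for some `y : T → M`, namely `0` if `a ≠ 0`
and a section of `b` if `a = 0`.

For `M = X × P` and `N = X × Q` this makes `(X / rad X) × (P / rad P)` a quotient of `X × Q`.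
Cancelling `X / rad X` in the same way gives a surjection from `Q` onto `P / rad P`. It lifts to a
map `Q → P` because `Q` is projective, the lift is surjective because `rad P` is superfluous, and it
is bijective because additivity of length forces `P` and `Q` to have the same finite length.
-/

section Semisimple

open LinearMap

variable {A : Type*} [Ring A]
  {M : Type*} [AddCommGroup M] [Module A M]
  {N : Type*} [AddCommGroup N] [Module A N]
  {T : Type*} [AddCommGroup T] [Module A T]

theorem isSemisimpleModule_prod [IsSemisimpleModule A M] [IsSemisimpleModule A N] :
    IsSemisimpleModule A (M × N) := by
  have hsup : IsSemisimpleModule A ↥(range (inl A M N) ⊔ range (inr A M N)) :=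
    .sup (.range _) (.range _)
  rw [sup_range_inl_inr] at hsup
  exact .congr Submodule.topEquiv.symm

theorem exists_comp_eq_of_ker_le_ker {g : M →ₗ[A] N} (hg : Function.Surjective g)
    {h : M →ₗ[A] T} (hker : ker g ≤ ker h) : ∃ k : N →ₗ[A] T, k ∘ₗ g = h := by
  refine ⟨(ker g).liftQ h hker ∘ₗ (g.quotKerEquivOfSurjective hg).symm.toLinearMap, ?_⟩
  ext x
  have hx : (g.quotKerEquivOfSurjective hg).symm (g x) = (ker g).mkQ x :=
    (g.quotKerEquivOfSurjective hg).symm_apply_eq.2 rfl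
  simp [hx]

theorem isSemisimpleModule_quotient_jacobson [IsArtinian A M] :
    IsSemisimpleModule A (M ⧸ Module.jacobson A M) :=
  (IsArtinian.isSemisimpleModule_iff_jacobson A _).2 (Module.jacobson_quotient_jacobson A M)

theorem exists_comp_mkQ_jacobson_eq [IsSemisimpleModule A N] (f : M →ₗ[A] N) :
    ∃ g : (M ⧸ Module.jacobson A M) →ₗ[A] N, g ∘ₗ (Module.jacobson A M).mkQ = f := by
  have hker : Module.jacobson A M ≤ ker f := by
    simpa [IsSemisimpleModule.jacobson_eq_bot] using Module.le_comap_jacobson f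
  exact ⟨(Module.jacobson A M).liftQ f hker, Submodule.liftQ_mkQ _ f hker⟩

theorem surjective_of_surjective_mkQ_jacobson_comp [IsCoatomic (Submodule A N)] {f : M →ₗ[A] N}
    (hf : Function.Surjective ((Module.jacobson A N).mkQ ∘ₗ f)) : Function.Surjective f := by
  have hsup : Module.jacobson A N ⊔ range f = ⊤ := by
    rwa [← Submodule.map_mkQ_eq_top, ← range_comp, range_eq_top]
  rw [← range_eq_top]
  by_contra hne
  obtain ⟨m, hm, hle⟩ := (eq_top_or_exists_le_coatom (range f)).resolve_left hne
  exact hm.1 (top_le_iff.1 (hsup ▸ sup_le (sInf_le hm) hle))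

theorem bijective_of_surjective_of_length_eq [IsArtinian A M] [IsNoetherian A M] {f : M →ₗ[A] N}
    (hf : Function.Surjective f) (hlen : Module.length A M = Module.length A N) :
    Function.Bijective f := by
  refine ⟨ker_eq_bot.1 (by_contra fun hker => ?_), hf⟩
  have hlt := (ker f).length_quotient_lt hker
  rw [(f.quotKerEquivOfSurjective hf).length_eq] at hlt
  exact hlt.ne hlen.symm

theorem exists_surjective_prod_of_exact {E Z W : Type*} [AddCommGroup E] [Module A E]
    [AddCommGroup Z] [Module A Z] [AddCommGroup W] [Module A W] [IsSemisimpleModule A W]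
    {f : N →ₗ[A] E} {g : E →ₗ[A] Z} (hfg : range f = ker g) (hg : Function.Surjective g)
    {p : E →ₗ[A] W} (hp : Function.Surjective p) :
    ∃ q : N × Z →ₗ[A] W, Function.Surjective q := by
  let I := range (p ∘ₗ f)
  have hker : ker g ≤ ker (I.mkQ ∘ₗ p) := by
    rw [← hfg, range_le_ker_iff, comp_assoc]
    exact range_mkQ_comp _
  obtain ⟨r, hr⟩ := exists_comp_eq_of_ker_le_ker hg hker
  obtain ⟨s, hs⟩ := IsSemisimpleModule.lifting_property I.mkQ I.mkQ_surjective r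
  refine ⟨(p ∘ₗ f).coprod s, fun w => ?_⟩
  obtain ⟨e, rfl⟩ := hp w
  have he : I.mkQ (p e) = I.mkQ (s (g e)) := by
    rw [← comp_apply I.mkQ s, hs, ← comp_apply r g, hr, comp_apply]
  obtain ⟨n, hn⟩ := (Submodule.Quotient.eq I).1 he
  exact ⟨(n, g e), by rw [coprod_apply, hn, sub_add_cancel]⟩

theorem exists_surjective_of_bijective_fst_comp {f : T × M →ₗ[A] T × N}
    (hf : Function.Surjective f) (y : T →ₗ[A] M)
    (hy : Function.Bijective (fst A T N ∘ₗ f ∘ₗ LinearMap.id.prod y)) :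
    ∃ g : M →ₗ[A] N, Function.Surjective g := by
  let i : T →ₗ[A] T × M := LinearMap.id.prod y
  let e : T ≃ₗ[A] T := .ofBijective (fst A T N ∘ₗ f ∘ₗ i) hy
  -- the projection onto `ker (fst ∘ f)` along the range of `i`
  let projKer : T × M →ₗ[A] T × M := LinearMap.id - i ∘ₗ e.symm.toLinearMap ∘ₗ fst A T N ∘ₗ f
  have projKer_i (t : T) : projKer (i t) = 0 := by
    have ht : e.symm (f (i t)).1 = t := e.symm_apply_apply t
    simp [projKer, ht]
  refine ⟨snd A T N ∘ₗ f ∘ₗ projKer ∘ₗ inr A T M, fun n => ?_⟩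
  obtain ⟨⟨t, m⟩, hx⟩ := hf (0, n)
  refine ⟨m - y t, ?_⟩
  have hsplit : inr A T M (m - y t) = (t, m) - i t := by simp [i]
  have hprojKer : projKer (t, m) = (t, m) := by simp [projKer, hx]
  change (f (projKer (inr A T M (m - y t)))).2 = n
  rw [hsplit, map_sub, projKer_i, sub_zero, hprojKer, hx]

theorem exists_bijective_add_comp_of_isSimpleModule [IsSimpleModule A T] [IsSemisimpleModule A M]
    {a : T →ₗ[A] T} {b : M →ₗ[A] T} (hab : Function.Surjective (a.coprod b)) :
    ∃ y : T →ₗ[A] M, Function.Bijective (a + b ∘ₗ y) := by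
  obtain ha | rfl := a.bijective_or_eq_zero
  · exact ⟨0, by simpa using ha⟩
  · have hb : Function.Surjective b := fun t => by
      obtain ⟨⟨_, m⟩, hm⟩ := hab t
      exact ⟨m, by simpa using hm⟩
    obtain ⟨y, hy⟩ := IsSemisimpleModule.lifting_property b hb LinearMap.id
    exact ⟨y, by simpa [hy] using Function.bijective_id⟩

theorem exists_surjective_of_prod_isSimpleModule [IsSimpleModule A T] [IsSemisimpleModule A M]
    {f : T × M →ₗ[A] T × N} (hf : Function.Surjective f) :
    ∃ g : M →ₗ[A] N, Function.Surjective g := by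
  let a := fst A T N ∘ₗ f ∘ₗ inl A T M
  let b := fst A T N ∘ₗ f ∘ₗ inr A T M
  have hab : a.coprod b = fst A T N ∘ₗ f := by ext <;> simp [a, b]
  have hsurj : Function.Surjective (a.coprod b) := by
    rw [hab]
    exact Prod.fst_surjective.comp hf
  obtain ⟨y, hy⟩ := exists_bijective_add_comp_of_isSimpleModule hsurj
  refine exists_surjective_of_bijective_fst_comp hf y ?_
  convert hy using 2
  rw [← comp_assoc, ← hab, coprod_comp_prod, comp_id]

theorem exists_surjective_of_prod_isFiniteLength (hT : IsFiniteLength A T)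
    [hTss : IsSemisimpleModule A T] [IsSemisimpleModule A M]
    {f : T × M →ₗ[A] T × N} (hf : Function.Surjective f) :
    ∃ g : M →ₗ[A] N, Function.Surjective g := by
  induction hT generalizing hTss with
  | of_subsingleton =>
    exact exists_surjective_of_bijective_fst_comp hf 0
      ⟨Function.injective_of_subsingleton _, Function.surjective_to_subsingleton _⟩
  | @of_simple_quotient T _ _ K _ _ ih =>
    obtain ⟨C, hKC⟩ := exists_isCompl K
    let e : T ≃ₗ[A] (T ⧸ K) × K :=
      (C.prodEquivOfIsCompl K hKC.symm).symm ≪≫ₗ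
        (K.quotientEquivOfIsCompl C hKC).symm.prodCongr (.refl A K)
    let eM := e.prodCongr (.refl A M) ≪≫ₗ .prodAssoc A (T ⧸ K) K M
    let eN := e.prodCongr (.refl A N) ≪≫ₗ .prodAssoc A (T ⧸ K) K N
    have : IsSemisimpleModule A (K × M) := isSemisimpleModule_prod
    obtain ⟨g, hg⟩ := exists_surjective_of_prod_isSimpleModule
      (f := eN.toLinearMap ∘ₗ f ∘ₗ eM.symm.toLinearMap)
      (eN.surjective.comp (hf.comp eM.symm.surjective))
    exact ih hg

theorem exists_surjective_of_prod_quotient_jacobson {Y S : Type*}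
    [AddCommGroup Y] [Module A Y] [IsArtinian A Y]
    [AddCommGroup S] [Module A S] [IsSemisimpleModule A S]
    {f : Y × N →ₗ[A] (Y ⧸ Module.jacobson A Y) × S} (hf : Function.Surjective f) :
    ∃ g : N →ₗ[A] S, Function.Surjective g := by
  let H := Y ⧸ Module.jacobson A Y
  have : IsSemisimpleModule A H := isSemisimpleModule_quotient_jacobson
  have hH : IsFiniteLength A H :=
    ((IsSemisimpleModule.finite_tfae (R := A) (M := H)).out 2 3 :).1 inferInstance
  have : IsSemisimpleModule A (H × S) := isSemisimpleModule_prod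
  let R := range (f ∘ₗ inr A Y N)
  obtain ⟨r, hr⟩ := exists_comp_mkQ_jacobson_eq (f ∘ₗ inl A Y N)
  have hsurj : Function.Surjective (r.coprod R.subtype) := fun w => by
    obtain ⟨⟨y, n⟩, rfl⟩ := hf w
    refine ⟨((Module.jacobson A Y).mkQ y, (f ∘ₗ inr A Y N).rangeRestrict n), ?_⟩
    rw [coprod_apply, ← comp_apply r, hr]
    simp [R, ← map_add]
  obtain ⟨g, hg⟩ := exists_surjective_of_prod_isFiniteLength hH hsurj
  exact ⟨g ∘ₗ (f ∘ₗ inr A Y N).rangeRestrict, hg.comp (surjective_rangeRestrict _)⟩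

end Semisimple

namespace DegLE

variable {A : Type u} [Ring A] [IsArtinianRing A]
  {M : Type u} [AddCommGroup M] [Module A M] {N : Type u} [AddCommGroup N] [Module A N]

theorem length_eq (h : DegLE A M N) : Module.length A M = Module.length A N := by
  obtain ⟨Z, _, _, _, f, g, hf, hg, hfg⟩ := h
  have hadd : Module.length A M + Module.length A Z = Module.length A N + Module.length A Z := by
    rw [← Module.length_prod]
    exact Module.length_eq_add_of_exact f g hf hg (LinearMap.exact_iff.2 hfg.symm)
  exact ENat.add_left_injective_of_ne_top Module.length_ne_top hadd

theorem exists_surjective_of_isSemisimpleModule (h : DegLE A M N) {S : Type*} [AddCommGroup S]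
    [Module A S] [IsSemisimpleModule A S] {p : M →ₗ[A] S} (hp : Function.Surjective p) :
    ∃ q : N →ₗ[A] S, Function.Surjective q := by
  obtain ⟨Z, _, _, _, f, g, -, hg, hfg⟩ := h
  have : IsSemisimpleModule A (Z ⧸ Module.jacobson A Z) := isSemisimpleModule_quotient_jacobson
  have : IsSemisimpleModule A ((Z ⧸ Module.jacobson A Z) × S) := isSemisimpleModule_prod
  have hsurj : Function.Surjective
      ((Module.jacobson A Z).mkQ.prodMap p ∘ₗ (LinearEquiv.prodComm A M Z).toLinearMap) :=
    ((Submodule.mkQ_surjective _).prodMap hp).comp (LinearEquiv.prodComm A M Z).surjective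
  obtain ⟨q, hq⟩ := exists_surjective_prod_of_exact hfg hg hsurj
  exact exists_surjective_of_prod_quotient_jacobson
    (f := q ∘ₗ (LinearEquiv.prodComm A Z N).toLinearMap)
    (hq.comp (LinearEquiv.prodComm A Z N).surjective)

end DegLE

theorem projective_cancellation_of_deg_general
    {A : Type u} [Ring A] [IsArtinianRing A]
    {X : Type u} [AddCommGroup X] [Module A X] [Module.Finite A X]
    {P : Type u} [AddCommGroup P] [Module A P] [Module.Finite A P]
    {Q : Type u} [AddCommGroup Q] [Module A Q] [Module.Finite A Q] [Module.Projective A Q]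
    (h : DegLE A (X × P) (X × Q)) :
    Nonempty (P ≃ₗ[A] Q) := by
  have hlen : Module.length A P = Module.length A Q := by
    have hXlen := h.length_eq
    rw [Module.length_prod, Module.length_prod] at hXlen
    exact ENat.add_right_injective_of_ne_top Module.length_ne_top hXlen
  let πX := (Module.jacobson A X).mkQ
  let πP := (Module.jacobson A P).mkQ
  have : IsSemisimpleModule A (X ⧸ Module.jacobson A X) := isSemisimpleModule_quotient_jacobson
  have : IsSemisimpleModule A (P ⧸ Module.jacobson A P) := isSemisimpleModule_quotient_jacobson
  have : IsSemisimpleModule A ((X ⧸ Module.jacobson A X) × (P ⧸ Module.jacobson A P)) :=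
    isSemisimpleModule_prod
  have hπ : Function.Surjective (πX.prodMap πP) :=
    (Submodule.mkQ_surjective _).prodMap (Submodule.mkQ_surjective _)
  obtain ⟨q, hq⟩ := h.exists_surjective_of_isSemisimpleModule hπ
  obtain ⟨t, ht⟩ := exists_surjective_of_prod_quotient_jacobson hq
  obtain ⟨s, rfl⟩ := Module.projective_lifting_property πP t (Submodule.mkQ_surjective _)
  have hs : Function.Bijective s :=
    bijective_of_surjective_of_length_eq (surjective_of_surjective_mkQ_jacobson_comp ht) hlen.symm
  exact ⟨(LinearEquiv.ofBijective s hs).symm⟩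

/-- Cancellation of projectives under degeneration. -/
theorem projective_cancellation_of_deg
    (k : Type u) [Field k] (A : Type u) [Ring A] [Algebra k A] [FiniteDimensional k A]
    (X : Type u) [AddCommGroup X] [Module A X] [Module.Finite A X]
    (P : Type u) [AddCommGroup P] [Module A P] [Module.Finite A P] [Module.Projective A P]
    (Q : Type u) [AddCommGroup Q] [Module A Q] [Module.Finite A Q] [Module.Projective A Q]
    (h : DegLE A (X × P) (X × Q)) :
    Nonempty (P ≃ₗ[A] Q) := by
  have : IsArtinianRing A := isArtinian_of_tower k inferInstance
  exact projective_cancellation_of_deg_general h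
end

section
/- Stable degeneration equals the triangle relation in the stable module category, in concrete form: let X and Y be finitely generated left A-modules over a finite-dimensional k-algebra A. Then X ≤_st Y if and only if there exist a finitely generated A-module Z and finitely generated projective A-modules P, Q, R together with a short exact sequence of A-modules 0 → Y ⊕ P → X ⊕ Z ⊕ Q → Z ⊕ R → 0. -/
/-!
Adding the split sequence `0 → R → R → 0 → 0` to `0 → Y ⊕ P → X ⊕ Z ⊕ Q → Z ⊕ R → 0` puts the
summand `R` into the middle term, so that `Z ⊕ R` becomes a summand of it and the sequence, read as
`0 → Y ⊕ (P ⊕ R) → (X ⊕ Q) ⊕ (Z ⊕ R) → Z ⊕ R → 0`, is a degeneration of `X ⊕ Q` to `Y ⊕ (P ⊕ R)`.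
Conversely, a degeneration sequence has the required shape with `R = 0`.
-/

universe u

/-- `IsExtension A N M L` : `M` is an extension of `L` by `N`, i.e. there exists a short exact
sequence of `A`-modules `0 → N → M → L → 0`. The maps are not part of the data, so that such
sequences can be transported along isomorphisms and added without naming them. -/
def IsExtension (A : Type*) [Ring A] (N M L : Type*) [AddCommGroup N] [Module A N]
    [AddCommGroup M] [Module A M] [AddCommGroup L] [Module A L] : Prop :=
  ∃ (f : N →ₗ[A] M) (g : M →ₗ[A] L),
    Function.Injective f ∧ Function.Surjective g ∧ LinearMap.range f = LinearMap.ker g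

namespace IsExtension

variable {A : Type*} [Ring A] {N M L N' M' L' : Type*}
  [AddCommGroup N] [Module A N] [AddCommGroup M] [Module A M] [AddCommGroup L] [Module A L]
  [AddCommGroup N'] [Module A N'] [AddCommGroup M'] [Module A M'] [AddCommGroup L'] [Module A L']

theorem congr (h : IsExtension A N M L) (eN : N ≃ₗ[A] N') (eM : M ≃ₗ[A] M')
    (eL : L ≃ₗ[A] L') : IsExtension A N' M' L' := by
  obtain ⟨f, g, hf, hg, hfg⟩ := h
  refine ⟨eM ∘ₗ f ∘ₗ eN.symm, eL ∘ₗ g ∘ₗ eM.symm,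
    eM.injective.comp (hf.comp eN.symm.injective),
    eL.surjective.comp (hg.comp eM.symm.surjective), ?_⟩
  rw [LinearEquiv.ker_comp, LinearMap.ker_comp, LinearMap.range_comp, LinearEquiv.range_comp,
    hfg]
  exact Submodule.map_equiv_eq_comap_symm eM _

theorem prod (h : IsExtension A N M L) (h' : IsExtension A N' M' L') :
    IsExtension A (N × N') (M × M') (L × L') := by
  obtain ⟨f, g, hf, hg, hfg⟩ := h
  obtain ⟨f', g', hf', hg', hfg'⟩ := h'
  refine ⟨f.prodMap f', g.prodMap g', hf.prodMap hf', hg.prodMap hg', ?_⟩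
  rw [LinearMap.range_prodMap, LinearMap.ker_prodMap, hfg, hfg']

variable (A M) in
theorem self_punit : IsExtension A M M PUnit :=
  ⟨.id, 0, Function.injective_id, Function.surjective_to_subsingleton _,
    LinearMap.range_id.trans LinearMap.ker_zero.symm⟩

end IsExtension

/-- The isomorphism `(M ⊕ N) ⊕ L ≃ M ⊕ (L ⊕ N)`, which passes between the order of summands in
`DegLE` and the one in the triangle relation. -/
def prodAssocComm (A M N L : Type*) [Semiring A] [AddCommMonoid M] [Module A M]
    [AddCommMonoid N] [Module A N] [AddCommMonoid L] [Module A L] :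
    ((M × N) × L) ≃ₗ[A] (M × L × N) :=
  LinearEquiv.prodAssoc A M N L ≪≫ₗ (LinearEquiv.refl A M).prodCongr (LinearEquiv.prodComm A N L)

theorem stDegLE_iff_exists_ses_general
    (A : Type u) [Ring A] (X : Type u) [AddCommGroup X] [Module A X]
    (Y : Type u) [AddCommGroup Y] [Module A Y] :
    StDegLE A X Y ↔
      ∃ (Z : Type u) (_ : AddCommGroup Z) (_ : Module A Z)
        (P : Type u) (_ : AddCommGroup P) (_ : Module A P)
        (Q : Type u) (_ : AddCommGroup Q) (_ : Module A Q)
        (R : Type u) (_ : AddCommGroup R) (_ : Module A R),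
        Module.Finite A Z ∧
        Module.Finite A P ∧ Module.Projective A P ∧
        Module.Finite A Q ∧ Module.Projective A Q ∧
        Module.Finite A R ∧ Module.Projective A R ∧
        IsExtension A (Y × P) (X × Z × Q) (Z × R) := by
  constructor
  · rintro ⟨P, _, _, Q, _, _, hP, hP', hQ, hQ', Z, _, _, hZ,
      (h : IsExtension A (Y × Q) ((X × P) × Z) Z)⟩
    have h' : IsExtension A (Y × Q) (X × Z × P) (Z × PUnit.{u + 1}) :=
      h.congr (.refl A _) (prodAssocComm A X P Z) LinearEquiv.prodUnique.symm
    exact ⟨Z, _, _, Q, _, _, P, _, _, PUnit, _, _, hZ, hQ, hQ', hP, hP',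
      inferInstance, inferInstance, h'⟩
  · rintro ⟨Z, _, _, P, _, _, Q, _, _, R, _, _, hZ, hP, hP', hQ, hQ', hR, hR', h⟩
    have h' : IsExtension A (Y × P × R) ((X × Q) × Z × R) (Z × R) :=
      (h.prod (.self_punit A R)).congr (.prodAssoc A Y P R)
        ((prodAssocComm A X Q Z).symm.prodCongr (.refl A R) ≪≫ₗ .prodAssoc A (X × Q) Z R)
        LinearEquiv.prodUnique
    exact ⟨Q, _, _, P × R, _, _, hQ, hQ', inferInstance, inferInstance,
      Z × R, _, _, inferInstance, h'⟩

/-- Stable degeneration equals the triangle relation in the stable module category,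
in concrete form. -/
theorem stDegLE_iff_exists_ses
    (k : Type u) [Field k] (A : Type u) [Ring A] [Algebra k A] [FiniteDimensional k A]
    (X : Type u) [AddCommGroup X] [Module A X] [Module.Finite A X]
    (Y : Type u) [AddCommGroup Y] [Module A Y] [Module.Finite A Y] :
    StDegLE A X Y ↔
      ∃ (Z : Type u) (_ : AddCommGroup Z) (_ : Module A Z)
        (P : Type u) (_ : AddCommGroup P) (_ : Module A P)
        (Q : Type u) (_ : AddCommGroup Q) (_ : Module A Q)
        (R : Type u) (_ : AddCommGroup R) (_ : Module A R),
        Module.Finite A Z ∧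
        Module.Finite A P ∧ Module.Projective A P ∧
        Module.Finite A Q ∧ Module.Projective A Q ∧
        Module.Finite A R ∧ Module.Projective A R ∧
        ∃ (f : (Y × P) →ₗ[A] (X × Z × Q)) (g : (X × Z × Q) →ₗ[A] (Z × R)),
          Function.Injective f ∧ Function.Surjective g ∧
          LinearMap.range f = LinearMap.ker g :=
  stDegLE_iff_exists_ses_general A X Y
end

section
/- Syzygies preserve stable degeneration: let A be a finite-dimensional k-algebra and let X, Y be finitely generated left A-modules with X ≤_st Y. Suppose 0 → X' → P → X → 0 and 0 → Y' → Q → Y → 0 are short exact sequences of A-modules with P and Q finitely generated projective (so X' and Y' are syzygies of X and Y). Then X' ≤_st Y'. -/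
universe u

/-!
Adding a projective summand to a module does not change its syzygies, so it suffices to treat a
degeneration, that is, a short exact sequence `0 → Y → X × Z → Z → 0`. Cover its outer terms by
projectives `Q → Y` and `F → Z` with kernels `Y'` and `K`. The horseshoe lemma covers the middle
term by `Q × F`, and the kernel `L` of that cover is an extension of `K` by `Y'`. A projective
surjection `P → X` with kernel `X'` gives another cover `P × F` of the middle term, with kernel
`X' × K`, so Schanuel's lemma identifies `L × (P × F)` with `(X' × K) × (Q × F)`. Hence there is a
short exact sequence `0 → Y' × (P × F) → (X' × (Q × F)) × K → K → 0`.
-/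

/-- The maps `f` and `g` form a short exact sequence `0 → M → N → P → 0` of modules. This is the
unbundled form of `CategoryTheory.ShortComplex.ShortExact`, allowing each module its own
universe. -/
structure IsShortExact {A M N P : Type*} [Ring A] [AddCommGroup M] [Module A M]
    [AddCommGroup N] [Module A N] [AddCommGroup P] [Module A P]
    (f : M →ₗ[A] N) (g : N →ₗ[A] P) : Prop where
  injective : Function.Injective f
  exact : Function.Exact f g
  surjective : Function.Surjective g

namespace IsShortExact

section Basic

variable {A M N P M' N' P' : Type*} [Ring A]
  [AddCommGroup M] [Module A M] [AddCommGroup N] [Module A N] [AddCommGroup P] [Module A P]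
  [AddCommGroup M'] [Module A M'] [AddCommGroup N'] [Module A N'] [AddCommGroup P'] [Module A P']
  {f : M →ₗ[A] N} {g : N →ₗ[A] P} {f' : M' →ₗ[A] N'} {g' : N' →ₗ[A] P'}

theorem iff_range_eq_ker :
    IsShortExact f g ↔
      Function.Injective f ∧ Function.Surjective g ∧ LinearMap.range f = LinearMap.ker g :=
  ⟨fun h ↦ ⟨h.injective, h.surjective, h.exact.linearMap_ker_eq.symm⟩,
    fun ⟨hf, hg, hfg⟩ ↦ ⟨hf, LinearMap.exact_iff.mpr hfg.symm, hg⟩⟩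

theorem ker_subtype (hg : Function.Surjective g) : IsShortExact (LinearMap.ker g).subtype g :=
  ⟨Subtype.val_injective, LinearMap.exact_subtype_ker_map g, hg⟩

variable (A M N) in
theorem inl_snd : IsShortExact (LinearMap.inl A M N) (LinearMap.snd A M N) :=
  ⟨LinearMap.inl_injective, Function.Exact.inl_snd, LinearMap.snd_surjective⟩

theorem prodMap (h : IsShortExact f g) (h' : IsShortExact f' g') :
    IsShortExact (f.prodMap f') (g.prodMap g') where
  injective := h.injective.prodMap h'.injective
  exact := fun ⟨x, y⟩ ↦ by
    simp [Prod.ext_iff, h.exact x, h'.exact y]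
  surjective := h.surjective.prodMap h'.surjective

theorem inl_comp_prodMap_id (h : IsShortExact f g) (S : Type*) [AddCommGroup S] [Module A S] :
    IsShortExact (LinearMap.inl A N S ∘ₗ f) (g.prodMap (LinearMap.id : S →ₗ[A] S)) where
  injective := LinearMap.inl_injective.comp h.injective
  exact := fun ⟨x, s⟩ ↦ by
    simp [Prod.ext_iff, h.exact x, eq_comm (a := s)]
  surjective := h.surjective.prodMap Function.surjective_id

theorem prodMap_id_comp_fst (h : IsShortExact f g) (S : Type*) [AddCommGroup S] [Module A S] :
    IsShortExact (f.prodMap (LinearMap.id : S →ₗ[A] S)) (g ∘ₗ LinearMap.fst A N S) where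
  injective := h.injective.prodMap Function.injective_id
  exact := fun ⟨x, s⟩ ↦ by
    simp [Prod.ext_iff, h.exact x]
  surjective := h.surjective.comp Prod.fst_surjective

theorem conj_linearEquiv (h : IsShortExact f g) (e : N ≃ₗ[A] N') :
    IsShortExact (e.toLinearMap ∘ₗ f) (g ∘ₗ e.symm.toLinearMap) where
  injective := e.injective.comp h.injective
  exact := (e.conj_exact_iff_exact f g).mpr h.exact
  surjective := h.surjective.comp e.symm.surjective

end Basic

section Projective

variable {A K L M P Q : Type*} [Ring A]
  [AddCommGroup K] [Module A K] [AddCommGroup L] [Module A L] [AddCommGroup M] [Module A M]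
  [AddCommGroup P] [Module A P] [AddCommGroup Q] [Module A Q] [Module.Projective A Q]
  {i : K →ₗ[A] P} {p : P →ₗ[A] M} {j : L →ₗ[A] Q} {q : Q →ₗ[A] M}

/- Up to the sign of `q`, the kernel is the pullback of `p` and `q`. -/
theorem nonempty_prod_linearEquiv_ker_coprod (h : IsShortExact i p) (q : Q →ₗ[A] M) :
    Nonempty ((K × Q) ≃ₗ[A] LinearMap.ker (p.coprod q)) := by
  obtain ⟨τ, hτ⟩ := Module.projective_lifting_property p q h.surjective
  have p_τ (y : Q) : p (τ y) = q y := LinearMap.congr_fun hτ y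
  let φ : K × Q →ₗ[A] P × Q := (i.coprod (-τ)).prod (LinearMap.snd A K Q)
  have φ_injective : Function.Injective φ := by
    rintro ⟨x, y⟩ ⟨x', y'⟩ hxy
    obtain ⟨hx, rfl⟩ : i x + -τ y = i x' + -τ y' ∧ y = y' := Prod.ext_iff.mp hxy
    rw [h.injective (add_right_cancel hx)]
  have range_φ : LinearMap.range φ = LinearMap.ker (p.coprod q) := by
    apply le_antisymm
    · rintro _ ⟨⟨x, y⟩, rfl⟩
      simp [φ, p_τ, h.exact.apply_apply_eq_zero]
    · rintro ⟨z, y⟩ (hzy : p z + q y = 0)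
      obtain ⟨x, hx⟩ := (h.exact (z + τ y)).mp (by rw [map_add, p_τ, hzy])
      exact ⟨(x, y), by simp [φ, hx]⟩
  exact ⟨(LinearEquiv.ofInjective φ φ_injective).trans (LinearEquiv.ofEq _ _ range_φ)⟩

theorem schanuel_lemma [Module.Projective A P] (hp : IsShortExact i p) (hq : IsShortExact j q) :
    Nonempty ((K × Q) ≃ₗ[A] (L × P)) := by
  obtain ⟨e⟩ := hp.nonempty_prod_linearEquiv_ker_coprod q
  obtain ⟨e'⟩ := hq.nonempty_prod_linearEquiv_ker_coprod p
  have map_swap : (LinearMap.ker (p.coprod q)).map (LinearEquiv.prodComm A P Q).toLinearMap =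
      LinearMap.ker (q.coprod p) := by
    ext ⟨y, x⟩
    simp [add_comm]
  exact ⟨e.trans (((LinearEquiv.prodComm A P Q).ofSubmodules _ _ map_swap).trans e'.symm)⟩

end Projective

section Horseshoe

variable {A N M Z N' Q E F K : Type*} [Ring A]
  [AddCommGroup N] [Module A N] [AddCommGroup M] [Module A M] [AddCommGroup Z] [Module A Z]
  [AddCommGroup N'] [Module A N'] [AddCommGroup Q] [Module A Q] [AddCommGroup E] [Module A E]
  [AddCommGroup F] [Module A F] [AddCommGroup K] [Module A K]
  {f : N →ₗ[A] M} {g : M →ₗ[A] Z} {s : Q →ₗ[A] E} {t : E →ₗ[A] F}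
  {i : N' →ₗ[A] Q} {a : Q →ₗ[A] N} {p : E →ₗ[A] M} {j : K →ₗ[A] F} {c : F →ₗ[A] Z}

theorem nine_lemma (hst : IsShortExact s t) (hfg : IsShortExact f g)
    (hN : IsShortExact i a) (hZ : IsShortExact j c)
    (p_comp : p ∘ₗ s = f ∘ₗ a) (comp_p : g ∘ₗ p = c ∘ₗ t) :
    Function.Surjective p ∧
      ∃ (u : N' →ₗ[A] LinearMap.ker p) (v : LinearMap.ker p →ₗ[A] K), IsShortExact u v := by
  have p_s (x : Q) : p (s x) = f (a x) := LinearMap.congr_fun p_comp x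
  have g_p (e : E) : g (p e) = c (t e) := LinearMap.congr_fun comp_p e
  have exists_correction (m : M) (e : E) (h : g m = c (t e)) : ∃ x, p (e + s x) = m := by
    obtain ⟨n, hn⟩ := (hfg.exact (m - p e)).mp (by rw [map_sub, g_p, h, sub_self])
    obtain ⟨x, rfl⟩ := hN.surjective n
    exact ⟨x, by rw [map_add, p_s, hn, add_sub_cancel]⟩
  let u : N' →ₗ[A] LinearMap.ker p := (s ∘ₗ i).codRestrict _ fun x ↦ by
    simp [p_s, hN.exact.apply_apply_eq_zero]
  let v : LinearMap.ker p →ₗ[A] K :=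
    (LinearEquiv.ofInjective j hZ.injective).symm.toLinearMap ∘ₗ
      (t ∘ₗ (LinearMap.ker p).subtype).codRestrict _ fun e ↦
        (hZ.exact (t e)).mp (by rw [← g_p, LinearMap.mem_ker.mp e.2, map_zero])
  have j_v (e : LinearMap.ker p) : j (v e) = t e :=
    congrArg Subtype.val ((LinearEquiv.ofInjective j hZ.injective).apply_symm_apply _)
  refine ⟨fun m ↦ ?_, u, v, ?_, LinearMap.exact_of_comp_of_mem_range ?_ ?_, fun z ↦ ?_⟩
  · obtain ⟨y, hy⟩ := hZ.surjective (g m)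
    obtain ⟨e, rfl⟩ := hst.surjective y
    obtain ⟨x, hx⟩ := exists_correction m e hy.symm
    exact ⟨e + s x, hx⟩
  · exact fun x y hxy ↦ hN.injective (hst.injective (congrArg Subtype.val hxy))
  · exact LinearMap.ext fun x ↦ hZ.injective <|
      (j_v (u x)).trans ((hst.exact.apply_apply_eq_zero (i x)).trans (map_zero j).symm)
  · rintro ⟨e, he⟩ hv
    obtain ⟨x, rfl⟩ := (hst.exact e).mp ((j_v ⟨e, he⟩).symm.trans (by rw [hv, map_zero]))
    have fax : f (a x) = f 0 := by rw [← p_s, LinearMap.mem_ker.mp he, map_zero]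
    obtain ⟨x', rfl⟩ := (hN.exact x).mp (hfg.injective fax)
    exact ⟨x', rfl⟩
  · obtain ⟨e, he⟩ := hst.surjective (j z)
    obtain ⟨x, hx⟩ := exists_correction 0 e (by rw [map_zero, he, hZ.exact.apply_apply_eq_zero])
    refine ⟨⟨e + s x, hx⟩, hZ.injective ((j_v _).trans ?_)⟩
    rw [map_add, hst.exact.apply_apply_eq_zero, add_zero, he]

theorem horseshoe_lemma [Module.Projective A F]
    (hfg : IsShortExact f g) (hN : IsShortExact i a) (hZ : IsShortExact j c) :
    ∃ p : Q × F →ₗ[A] M, Function.Surjective p ∧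
      ∃ (u : N' →ₗ[A] LinearMap.ker p) (v : LinearMap.ker p →ₗ[A] K), IsShortExact u v := by
  obtain ⟨h, hh⟩ := Module.projective_lifting_property g c hfg.surjective
  refine ⟨(f ∘ₗ a).coprod h, nine_lemma (inl_snd A Q F) hfg hN hZ (LinearMap.coprod_inl _ _) ?_⟩
  rw [LinearMap.comp_coprod, ← LinearMap.comp_assoc, hfg.exact.linearMap_comp_eq_zero, hh]
  ext <;> simp

end Horseshoe

end IsShortExact

theorem degLE_of_isShortExact_of_linearEquiv {A M N L Z : Type u} [Ring A]
    [AddCommGroup M] [Module A M] [AddCommGroup N] [Module A N] [AddCommGroup L] [Module A L]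
    [AddCommGroup Z] [Module A Z] [Module.Finite A Z] {f : N →ₗ[A] L} {g : L →ₗ[A] Z}
    (h : IsShortExact f g) (e : L ≃ₗ[A] M × Z) : DegLE A M N :=
  ⟨Z, inferInstance, inferInstance, inferInstance, _, _,
    IsShortExact.iff_range_eq_ker.mp (h.conj_linearEquiv e)⟩

section Syzygy

variable {A : Type u} [Ring A] [IsNoetherianRing A]
  {X Y X' Y' P Q : Type u} [AddCommGroup X] [Module A X] [AddCommGroup Y] [Module A Y]
  [AddCommGroup X'] [Module A X'] [AddCommGroup Y'] [Module A Y']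
  [AddCommGroup P] [Module A P] [Module.Finite A P] [Module.Projective A P]
  [AddCommGroup Q] [Module A Q] [Module.Finite A Q] [Module.Projective A Q]
  {fX : X' →ₗ[A] P} {gX : P →ₗ[A] X} {fY : Y' →ₗ[A] Q} {gY : Q →ₗ[A] Y}

theorem DegLE.stDegLE_syzygy (hXY : DegLE A X Y)
    (hX : IsShortExact fX gX) (hY : IsShortExact fY gY) : StDegLE A X' Y' := by
  obtain ⟨Z, _, _, _, f, g, hfg⟩ := hXY
  obtain ⟨n, π, hπ⟩ := Module.Finite.exists_fin' A Z
  have hZ := IsShortExact.ker_subtype hπ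
  obtain ⟨p, hp, u, v, huv⟩ := (IsShortExact.iff_range_eq_ker.mpr hfg).horseshoe_lemma hY hZ
  obtain ⟨e⟩ := (IsShortExact.ker_subtype hp).schanuel_lemma (hX.prodMap hZ)
  let F := Fin n → A
  let K := LinearMap.ker π
  let e' : ((X' × K) × (Q × F)) ≃ₗ[A] (X' × (Q × F)) × K :=
    (LinearEquiv.prodAssoc A X' K (Q × F)).trans
      (((LinearEquiv.refl A X').prodCongr (LinearEquiv.prodComm A K (Q × F))).trans
        (LinearEquiv.prodAssoc A X' (Q × F) K).symm)
  exact ⟨Q × F, inferInstance, inferInstance, P × F, inferInstance, inferInstance,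
    inferInstance, inferInstance, inferInstance, inferInstance,
    degLE_of_isShortExact_of_linearEquiv (huv.prodMap_id_comp_fst (P × F)) (e.trans e')⟩

theorem syzygy_preserves_stable_degeneration_general (hXY : StDegLE A X Y)
    (hX : IsShortExact fX gX) (hY : IsShortExact fY gY) : StDegLE A X' Y' := by
  obtain ⟨P₀, _, _, Q₀, _, _, _, _, _, _, hdeg⟩ := hXY
  exact hdeg.stDegLE_syzygy (hX.inl_comp_prodMap_id P₀) (hY.inl_comp_prodMap_id Q₀)

end Syzygy

/-- Syzygies preserve stable degeneration. -/
theorem syzygy_preserves_stable_degeneration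
    (k : Type u) [Field k] (A : Type u) [Ring A] [Algebra k A] [FiniteDimensional k A]
    (X : Type u) [AddCommGroup X] [Module A X] [Module.Finite A X]
    (Y : Type u) [AddCommGroup Y] [Module A Y] [Module.Finite A Y]
    (X' : Type u) [AddCommGroup X'] [Module A X'] [Module.Finite A X']
    (Y' : Type u) [AddCommGroup Y'] [Module A Y'] [Module.Finite A Y']
    (P : Type u) [AddCommGroup P] [Module A P] [Module.Finite A P] [Module.Projective A P]
    (Q : Type u) [AddCommGroup Q] [Module A Q] [Module.Finite A Q] [Module.Projective A Q]
    (hXY : StDegLE A X Y)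
    (fX : X' →ₗ[A] P) (gX : P →ₗ[A] X)
    (hfX : Function.Injective fX) (hgX : Function.Surjective gX)
    (hX : LinearMap.range fX = LinearMap.ker gX)
    (fY : Y' →ₗ[A] Q) (gY : Q →ₗ[A] Y)
    (hfY : Function.Injective fY) (hgY : Function.Surjective gY)
    (hY : LinearMap.range fY = LinearMap.ker gY) :
    StDegLE A X' Y' := by
  have : IsNoetherianRing A := isNoetherian_of_tower k inferInstance
  exact syzygy_preserves_stable_degeneration_general hXY
    (IsShortExact.iff_range_eq_ker.mpr ⟨hfX, hgX, hX⟩)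
    (IsShortExact.iff_range_eq_ker.mpr ⟨hfY, hgY, hY⟩)
end
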